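/- For l ∈ ℝ⁶ let l⁺ ∈ ℝ⁶ be the vector with coordinates l⁺_ij = max(l_ij, 0), and define the dihedral angle function a_ij(l) = arccos(φ_ij(l⁺)) ∈ [0, π], where arccos : ℝ → [0, π] is the clamped inverse cosine (equal to π on arguments ≤ −1 and to 0 on arguments ≥ 1, as Real.arccos in Mathlib). Then there exists a C¹-smooth convex function cov : ℝ⁶ → ℝ such that ∂cov/∂l_ij(l) = a_ij(l) for every l ∈ ℝ⁶ and every pair {i,j} ⊂ {1,2,3,4}. -/

import Mathlib

/-- `bfun l i j k` is the quantity `b_h = √(2 c_ij c_ik c_jk + c_ij² + c_ik² + c_jk² − 1)`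
attached to the vertex `h` whose three opposite vertices are `i, j, k`
(where `c_rs = cosh l_rs`). -/
noncomputable def bfun (l : Fin 4 → Fin 4 → ℝ) (i j k : Fin 4) : ℝ :=
  Real.sqrt (2 * Real.cosh (l i j) * Real.cosh (l i k) * Real.cosh (l j k) +
    Real.cosh (l i j) ^ 2 + Real.cosh (l i k) ^ 2 + Real.cosh (l j k) ^ 2 - 1)

/-- `φ_ij(l) = (c_ik c_ih + c_jk c_jh + c_ij c_ik c_jh + c_ij c_ih c_jk − s_ij² c_kh)/(b_k b_h)`,
where `{i,j,k,h} = {1,2,3,4}`, `c_rs = cosh l_rs`, `s_rs = sinh l_rs`,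
`b_k = bfun l i j h` and `b_h = bfun l i j k`. -/
noncomputable def phiE (l : Fin 4 → Fin 4 → ℝ) (i j k h : Fin 4) : ℝ :=
  (Real.cosh (l i k) * Real.cosh (l i h) + Real.cosh (l j k) * Real.cosh (l j h) +
    Real.cosh (l i j) * Real.cosh (l i k) * Real.cosh (l j h) +
    Real.cosh (l i j) * Real.cosh (l i h) * Real.cosh (l j k) -
    Real.sinh (l i j) ^ 2 * Real.cosh (l k h)) /
  (bfun l i j h * bfun l i j k)

/-- The index in `Fin 6` of the edge `{r,s}` of the tetrahedron on vertices
`{0,1,2,3}`, edges ordered as `01, 02, 03, 12, 13, 23`. -/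
def eIdx (r s : Fin 4) : Fin 6 :=
  match r.val, s.val with
  | 0, 1 => 0 | 1, 0 => 0
  | 0, 2 => 1 | 2, 0 => 1
  | 0, 3 => 2 | 3, 0 => 2
  | 1, 2 => 3 | 2, 1 => 3
  | 1, 3 => 4 | 3, 1 => 4
  | 2, 3 => 5 | 3, 2 => 5
  | _, _ => 0

/-- The symmetric edge-length array attached to a vector `l ∈ ℝ⁶`. -/
def toMat (l : Fin 6 → ℝ) : Fin 4 → Fin 4 → ℝ :=
  fun r s => if r = s then 0 else l (eIdx r s)

/-!
A hyperideal tetrahedron has two `4 × 4` Gram matrices with unit diagonal: that of its vertices,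
with entries `-cosh l_ij`, and that of its face normals, with entries minus the cosines of the
dihedral angles. Each is the inverse of the other, rescaled to unit diagonal, so the angle map
inverts the edge length map, which is defined on the convex open polytope of all angles. The
Jacobian of the edge length map is symmetric, nonsingular on the polytope, and positive definite
at the regular tetrahedra, hence positive definite everywhere: the edge lengths are the gradient
of a convex function (`-2 vol`, by Schläfli's formula), and its Legendre transform `cov` has the
angles as gradient.

For any other `l` there is `l₀` in the closure of the set of hyperideal lengths with the same
angles, obtained by raising the negative lengths, whose angles are `0`, to `0` and lowering one
length whose angle is `π`. So `l - l₀` is an outward normal to the polytope at the angles of `l`,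
which are therefore still a subgradient of `cov` at `l`. A function with a continuous choice of
subgradients is convex and `C¹`.
-/

open Set Topology
open scoped Matrix

section Subgradient

variable {E : Type*} [NormedAddCommGroup E] [NormedSpace ℝ E] {f : E → ℝ} {G : E → E →L[ℝ] ℝ}

theorem hasFDerivAt_of_subgradient (h : ∀ x y, f x + G x (y - x) ≤ f y) {x : E}
    (hG : ContinuousAt G x) : HasFDerivAt f (G x) x := by
  rw [hasFDerivAt_iff_isLittleO, Asymptotics.isLittleO_iff]
  intro c hc
  filter_upwards [Metric.continuousAt_iff'.mp hG c hc] with y hy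
  rw [dist_eq_norm] at hy
  have hlower := h x y
  have hupper := h y x
  have hflip : G y (x - y) = -G y (y - x) := by rw [← map_neg, neg_sub]
  have hgap : (G y - G x) (y - x) ≤ c * ‖y - x‖ :=
    (le_abs_self _).trans (((G y - G x).le_opNorm _).trans (by gcongr))
  rw [sub_apply] at hgap
  have := mul_nonneg hc.le (norm_nonneg (y - x))
  rw [Real.norm_eq_abs, abs_le]
  constructor <;> linarith

theorem contDiff_one_of_subgradient (h : ∀ x y, f x + G x (y - x) ≤ f y) (hG : Continuous G) :
    ContDiff ℝ 1 f := by
  have hderiv : ∀ x, HasFDerivAt f (G x) x :=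
    fun x => hasFDerivAt_of_subgradient h hG.continuousAt
  rw [contDiff_one_iff_fderiv, show fderiv ℝ f = G from funext fun x => (hderiv x).fderiv]
  exact ⟨fun x => (hderiv x).differentiableAt, hG⟩

end Subgradient

section Potential

variable {E : Type*} [NormedAddCommGroup E] [NormedSpace ℝ E] {s : Set E}

theorem exists_potential_forall_add_apply_sub_le (hs : Convex ℝ s) (hso : IsOpen s)
    {ω : E → E →L[ℝ] ℝ} {ω' : E → E →L[ℝ] E →L[ℝ] ℝ} (hω : ∀ a ∈ s, HasFDerivAt ω (ω' a) a)
    (hsymm : ∀ a ∈ s, ∀ x y, ω' a x y = ω' a y x) (hnonneg : ∀ a ∈ s, ∀ x, 0 ≤ ω' a x x) :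
    ∃ V : E → ℝ, ∀ a ∈ s, ∀ b ∈ s, V a + ω a (b - a) ≤ V b := by
  obtain ⟨V, hV⟩ := hs.exists_forall_hasFDerivAt_of_fderiv_symmetric hso
    (fun a ha => (hω a ha).differentiableAt.differentiableWithinAt)
    (fun a ha => by simpa only [(hω a ha).fderiv] using hsymm a ha)
  refine ⟨V, fun a ha b hb => ?_⟩
  let p : ℝ → E := fun t => a + t • (b - a)
  have hp : ∀ t, HasDerivAt p (b - a) t := fun t => by
    simpa [p] using ((hasDerivAt_id t).smul_const (b - a)).const_add a
  have hps : ∀ t ∈ Icc (0 : ℝ) 1, p t ∈ s := fun t ht => hs.add_smul_sub_mem ha hb ht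
  have hVp : ∀ t ∈ Icc (0 : ℝ) 1, HasDerivAt (V ∘ p) (ω (p t) (b - a)) t :=
    fun t ht => (hV _ (hps t ht)).comp_hasDerivAt t (hp t)
  have hωp : ∀ t ∈ Icc (0 : ℝ) 1,
      HasDerivAt (fun t => ω (p t) (b - a)) (ω' (p t) (b - a) (b - a)) t := fun t ht =>
    ((hω _ (hps t ht)).comp_hasDerivAt t (hp t)).clm_apply (hasDerivAt_const t (b - a))
      |>.congr_deriv (by simp)
  have hmono : MonotoneOn (fun t => ω (p t) (b - a)) (Icc 0 1) :=
    monotoneOn_of_hasDerivWithinAt_nonneg (convex_Icc 0 1)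
      (fun t ht => (hωp t ht).continuousAt.continuousWithinAt)
      (fun t ht => (hωp t (interior_subset ht)).hasDerivWithinAt)
      (fun t ht => hnonneg _ (hps t (interior_subset ht)) _)
  have hconv : ConvexOn ℝ (Icc 0 1) (V ∘ p) :=
    MonotoneOn.convexOn_of_deriv (convex_Icc 0 1)
      (fun t ht => (hVp t ht).continuousAt.continuousWithinAt)
      (fun t ht => (hVp t (interior_subset ht)).differentiableAt.differentiableWithinAt)
      ((hmono.mono interior_subset).congr fun t ht => (hVp t (interior_subset ht)).deriv.symm)
  have hslope := hconv.le_slope_of_hasDerivAt (left_mem_Icc.2 zero_le_one)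
    (right_mem_Icc.2 zero_le_one) zero_lt_one (hVp 0 (left_mem_Icc.2 zero_le_one))
  simp only [p, slope_def_field, Function.comp_apply, zero_smul, add_zero, one_smul,
    add_sub_cancel, sub_zero, div_one] at hslope
  linarith

end Potential

section PosDef

variable {ι : Type*} [Fintype ι]

theorem isOpen_setOf_forall_dotProduct_mulVec_pos :
    IsOpen {A : Matrix ι ι ℝ | ∀ v, v ≠ 0 → 0 < v ⬝ᵥ A *ᵥ v} := by
  have hq : Continuous fun p : Matrix ι ι ℝ × (ι → ℝ) => p.2 ⬝ᵥ p.1 *ᵥ p.2 := by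
    unfold Matrix.mulVec dotProduct
    fun_prop
  refine isOpen_iff_mem_nhds.2 fun A hA => ?_
  have hsphere : ∀ᶠ A' in 𝓝 A, ∀ v ∈ Metric.sphere (0 : ι → ℝ) 1, 0 < v ⬝ᵥ A' *ᵥ v := by
    refine (isCompact_sphere 0 1).eventually_forall_of_forall_eventually fun v hv => ?_
    have hv0 : v ≠ 0 := ne_zero_of_mem_unit_sphere ⟨v, hv⟩
    exact (hq.tendsto (A, v)).eventually (lt_mem_nhds (hA v hv0))
  filter_upwards [hsphere] with A' hA' v hv
  have hunit := hA' (‖v‖⁻¹ • v) (by simp [norm_smul, hv])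
  rw [Matrix.mulVec_smul, smul_dotProduct, dotProduct_smul, smul_eq_mul, smul_eq_mul] at hunit
  have hinv : 0 < ‖v‖⁻¹ := inv_pos.2 (norm_pos_iff.2 hv)
  exact pos_of_mul_pos_right (pos_of_mul_pos_right hunit hinv.le) hinv.le

theorem posDef_of_isPreconnected [DecidableEq ι] {X : Type*} [TopologicalSpace X] {s : Set X}
    (hs : IsPreconnected s) {M : X → Matrix ι ι ℝ} (hM : ContinuousOn M s)
    (hherm : ∀ x ∈ s, (M x).IsHermitian) (hunit : ∀ x ∈ s, IsUnit (M x)) {x₀ : X} (hx₀ : x₀ ∈ s)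
    (hpos : (M x₀).PosDef) : ∀ x ∈ s, (M x).PosDef := by
  have hclosed : IsClosed {A : Matrix ι ι ℝ | ∀ v, 0 ≤ v ⬝ᵥ A *ᵥ v} := by
    simp only [ofPred_forall]
    refine isClosed_iInter fun v => isClosed_le continuous_const ?_
    unfold Matrix.mulVec dotProduct
    fun_prop
  have hdot : ∀ {A : Matrix ι ι ℝ}, A.PosDef → ∀ v, v ≠ 0 → 0 < v ⬝ᵥ A *ᵥ v :=
    fun hA v hv => by simpa using hA.dotProduct_mulVec_pos hv
  have himage : M '' s ⊆ {A : Matrix ι ι ℝ | ∀ v, v ≠ 0 → 0 < v ⬝ᵥ A *ᵥ v} := by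
    refine (hs.image M hM).subset_of_closure_inter_subset isOpen_setOf_forall_dotProduct_mulVec_pos
      ⟨M x₀, mem_image_of_mem M hx₀, hdot hpos⟩ ?_
    rintro _ ⟨hcl, x, hx, rfl⟩
    have hnonneg : ∀ v, 0 ≤ v ⬝ᵥ M x *ᵥ v := by
      refine closure_minimal (fun A hA v => ?_) hclosed hcl
      rcases eq_or_ne v 0 with rfl | hv
      · simp
      · exact (hA v hv).le
    have hpsd : (M x).PosSemidef :=
      .of_dotProduct_mulVec_nonneg (hherm x hx) (by simpa using hnonneg)
    exact hdot (hpsd.posDef_iff_isUnit.2 (hunit x hx))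
  exact fun x hx => .of_dotProduct_mulVec_pos (hherm x hx) fun v hv => by
    simpa using himage (mem_image_of_mem M hx) v hv

end PosDef

section Legendre

variable {ι : Type*} [Fintype ι]

/-- `y` is a subgradient of `f : ℝ^ι → ℝ` at `x` relative to `s`, where `ℝ^ι` is identified with its
dual through the dot product. -/
def IsSubgradientOn (f : (ι → ℝ) → ℝ) (s : Set (ι → ℝ)) (x y : ι → ℝ) : Prop :=
  ∀ z ∈ s, f x + y ⬝ᵥ (z - x) ≤ f z

/-- The Legendre transform of the restriction of `V` to `s`; it has the junk value `0` where the
supremum is infinite. -/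
noncomputable def legendreOn (V : (ι → ℝ) → ℝ) (s : Set (ι → ℝ)) (y : ι → ℝ) : ℝ :=
  ⨆ x : s, (y ⬝ᵥ (x : ι → ℝ) - V x)

/-- The dot product as a continuous bilinear form, turning a gradient vector into a derivative. -/
noncomputable def dotProductCLM : (ι → ℝ) →L[ℝ] (ι → ℝ) →L[ℝ] ℝ :=
  (dotProductBilin ℝ ℝ).toContinuousBilinearMap

theorem dotProductCLM_apply (x y : ι → ℝ) : dotProductCLM x y = x ⬝ᵥ y := rfl

variable {V f : (ι → ℝ) → ℝ} {s t : Set (ι → ℝ)} {x x₀ y y₀ : ι → ℝ}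

theorem bddAbove_range_dotProduct_sub (hs : Bornology.IsBounded s)
    (h : IsSubgradientOn V s x₀ y₀) (y : ι → ℝ) :
    BddAbove (range fun x : s => y ⬝ᵥ (x : ι → ℝ) - V x) := by
  obtain ⟨C, hC⟩ := ((dotProductCLM (y - y₀)).lipschitz.isBounded_image hs).bddAbove
  refine ⟨C + y₀ ⬝ᵥ x₀ - V x₀, ?_⟩
  rintro _ ⟨⟨x, hx⟩, rfl⟩
  have hlin : (y - y₀) ⬝ᵥ x ≤ C := hC ⟨x, hx, rfl⟩
  have hsub := h x hx
  rw [sub_dotProduct] at hlin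
  rw [dotProduct_sub] at hsub
  linarith

theorem dotProduct_sub_le_legendreOn
    (hV : BddAbove (range fun x : s => y ⬝ᵥ (x : ι → ℝ) - V x)) (hx : x ∈ s) :
    y ⬝ᵥ x - V x ≤ legendreOn V s y :=
  le_ciSup hV ⟨x, hx⟩

theorem convexOn_legendreOn (hs : s.Nonempty)
    (hV : ∀ y, BddAbove (range fun x : s => y ⬝ᵥ (x : ι → ℝ) - V x)) :
    ConvexOn ℝ univ (legendreOn V s) := by
  have := hs.to_subtype
  refine ⟨convex_univ, fun y _ z _ a b ha hb hab => ciSup_le fun ⟨x, hx⟩ => ?_⟩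
  calc (a • y + b • z) ⬝ᵥ x - V x = a • (y ⬝ᵥ x - V x) + b • (z ⬝ᵥ x - V x) := by
        rw [add_dotProduct, smul_dotProduct, smul_dotProduct]
        simp only [smul_eq_mul]
        linear_combination V x * hab
    _ ≤ a • legendreOn V s y + b • legendreOn V s z := by
        gcongr <;> exact dotProduct_sub_le_legendreOn (hV _) hx

theorem isSubgradientOn_legendreOn (h : IsSubgradientOn V s x y) (hx : x ∈ s)
    (hV : ∀ y, BddAbove (range fun x : s => y ⬝ᵥ (x : ι → ℝ) - V x)) :
    IsSubgradientOn (legendreOn V s) univ y x := by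
  have : Nonempty s := ⟨⟨x, hx⟩⟩
  intro z _
  have hle : legendreOn V s y ≤ y ⬝ᵥ x - V x := ciSup_le fun ⟨b, hb⟩ => by
    have := h b hb
    rw [dotProduct_sub] at this
    linarith
  have hge := dotProduct_sub_le_legendreOn (hV z) hx
  rw [dotProduct_comm, sub_dotProduct]
  linarith

theorem isSubgradientOn_of_mem_closure {F : (ι → ℝ) → ι → ℝ} (hf : Continuous f) (hF : Continuous F)
    (h : ∀ x ∈ t, IsSubgradientOn f s x (F x)) : ∀ x ∈ closure t, IsSubgradientOn f s x (F x) := by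
  intro x hx z hz
  have hclosed : IsClosed {x | f x + F x ⬝ᵥ (z - x) ≤ f z} :=
    isClosed_le (by unfold dotProduct; fun_prop) continuous_const
  exact closure_minimal (fun x hx => h x hx z hz) hclosed hx

theorem isSubgradientOn_legendreOn_of_normal
    (h : IsSubgradientOn (legendreOn V s) univ y₀ x) (hs : s.Nonempty)
    (hV : ∀ y, BddAbove (range fun x : s => y ⬝ᵥ (x : ι → ℝ) - V x))
    (hy : ∀ b ∈ s, (y - y₀) ⬝ᵥ (b - x) ≤ 0) : IsSubgradientOn (legendreOn V s) univ y x := by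
  have := hs.to_subtype
  intro z hz
  have hle : legendreOn V s y ≤ legendreOn V s y₀ + x ⬝ᵥ (y - y₀) := by
    refine ciSup_le fun ⟨b, hb⟩ => ?_
    have hnormal := hy b hb
    have hsup := dotProduct_sub_le_legendreOn (hV y₀) hb
    rw [dotProduct_sub, sub_dotProduct] at hnormal
    rw [dotProduct_comm x]
    linarith
  have hz := h z hz
  simp only [dotProduct_sub] at hle hz ⊢
  linarith

theorem exists_isSubgradientOn_of_posSemidef {L : (ι → ℝ) → ι → ℝ}
    {J : (ι → ℝ) → Matrix ι ι ℝ} (hs : Convex ℝ s) (hso : IsOpen s)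
    (hL : ∀ a ∈ s, ∀ e, HasFDerivAt (fun a => L a e) (dotProductCLM (J a e)) a)
    (hJ : ∀ a ∈ s, (J a).PosSemidef) : ∃ V, ∀ a ∈ s, IsSubgradientOn V s a (L a) := by
  have hω : ∀ a ∈ s, HasFDerivAt (fun a => dotProductCLM (L a))
      (dotProductCLM.comp (ContinuousLinearMap.pi fun e => dotProductCLM (J a e))) a :=
    fun a ha => dotProductCLM.hasFDerivAt.comp a (hasFDerivAt_pi.2 (hL a ha))
  have happly : ∀ a x y, dotProductCLM.comp
      (ContinuousLinearMap.pi fun e => dotProductCLM (J a e)) x y = (J a *ᵥ x) ⬝ᵥ y :=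
    fun _ _ _ => rfl
  refine exists_potential_forall_add_apply_sub_le hs hso hω (fun a ha x y => ?_)
    fun a ha x => ?_
  · have hsymm : (J a)ᵀ = J a := (hJ a ha).isHermitian
    rw [happly, happly, ← Matrix.vecMul_transpose, ← Matrix.dotProduct_mulVec, hsymm,
      dotProduct_comm]
  · rw [happly, dotProduct_comm]
    simpa only [star_trivial] using (hJ a ha).dotProduct_mulVec_nonneg x

theorem exists_contDiff_convexOn_fderiv_eq [DecidableEq ι] {B U : Set (ι → ℝ)}
    {L F : (ι → ℝ) → ι → ℝ} (hne : B.Nonempty) (hB : Bornology.IsBounded B)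
    (hL : ∃ V, ∀ a ∈ B, IsSubgradientOn V B a (L a)) (hF : Continuous F)
    (hU : ∀ l ∈ U, F l ∈ B ∧ L (F l) = l)
    (hnormal : ∀ l, ∃ l₀ ∈ closure U, F l₀ = F l ∧ ∀ b ∈ B, (l - l₀) ⬝ᵥ (b - F l) ≤ 0) :
    ∃ f : (ι → ℝ) → ℝ, ContDiff ℝ 1 f ∧ ConvexOn ℝ univ f ∧
      ∀ l e, fderiv ℝ f l (Pi.single e 1) = F l e := by
  obtain ⟨V, hV⟩ := hL
  obtain ⟨a₀, ha₀⟩ := hne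
  have hbdd := bddAbove_range_dotProduct_sub hB (hV a₀ ha₀)
  have hconv : ConvexOn ℝ univ (legendreOn V B) := convexOn_legendreOn ⟨a₀, ha₀⟩ hbdd
  have hinside : ∀ l ∈ U, IsSubgradientOn (legendreOn V B) univ l (F l) := fun l hl => by
    obtain ⟨hFB, hLF⟩ := hU l hl
    have := isSubgradientOn_legendreOn (hV _ hFB) hFB hbdd
    rwa [hLF] at this
  have hclosure := isSubgradientOn_of_mem_closure hconv.locallyLipschitz.continuous hF hinside
  have hsub : ∀ l z, legendreOn V B l + dotProductCLM (F l) (z - l) ≤ legendreOn V B z := by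
    intro l z
    obtain ⟨l₀, hl₀, hFl, hn⟩ := hnormal l
    exact isSubgradientOn_legendreOn_of_normal (hFl ▸ hclosure l₀ hl₀) ⟨a₀, ha₀⟩ hbdd hn z
      (mem_univ z)
  have hcont : Continuous fun l => dotProductCLM (F l) := dotProductCLM.continuous.comp hF
  refine ⟨_, contDiff_one_of_subgradient hsub hcont, hconv, fun l e => ?_⟩
  rw [(hasFDerivAt_of_subgradient hsub hcont.continuousAt).fderiv, dotProductCLM_apply,
    dotProduct_single_one]

end Legendre

section UnitGram

variable {n : Type*}

/-- A symmetric matrix with unit diagonal, i.e. the Gram matrix of unit vectors of some (possibly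
indefinite) quadratic space. -/
structure IsUnitGram {R : Type*} [One R] (M : Matrix n n R) : Prop where
  isSymm : M.IsSymm
  diag : ∀ i, M i i = 1

/-- The rescaling of `K` by a diagonal congruence which makes the diagonal equal to `1`; it is
meaningful when the diagonal of `K` is positive. -/
noncomputable def normalizeDiag (K : Matrix n n ℝ) : Matrix n n ℝ :=
  Matrix.of fun i j => K i j / (√(K i i) * √(K j j))

theorem isUnitGram_normalizeDiag {K : Matrix n n ℝ} (hK : K.IsSymm) (hpos : ∀ i, 0 < K i i) :
    IsUnitGram (normalizeDiag K) where
  isSymm := Matrix.IsSymm.ext fun i j => by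
    simp only [normalizeDiag, Matrix.of_apply, hK.apply, mul_comm]
  diag i := by
    rw [normalizeDiag, Matrix.of_apply, Real.mul_self_sqrt (hpos i).le, div_self (hpos i).ne']

variable [Fintype n] [DecidableEq n]

section
attribute [local instance] Matrix.linftyOpNormedRing Matrix.linftyOpNormedAlgebra

theorem hasFDerivAt_matrix_inv_apply {E : Type*} [NormedAddCommGroup E] [NormedSpace ℝ E]
    {M : E → Matrix n n ℝ} {M' : n → n → E →L[ℝ] ℝ} {x : E}
    (hM : ∀ i j, HasFDerivAt (fun x => M x i j) (M' i j) x) (hunit : IsUnit (M x)) (i j : n) :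
    HasFDerivAt (fun x => (M x)⁻¹ i j)
      (-∑ q, ∑ p, ((M x)⁻¹ i p * (M x)⁻¹ q j) • M' p q) x := by
  have hpi : HasFDerivAt M (ContinuousLinearMap.pi fun i => ContinuousLinearMap.pi (M' i)) x :=
    hasFDerivAt_pi.2 fun i => hasFDerivAt_pi.2 (hM i)
  have hinv := (hasFDerivAt_ringInverse hunit.unit).comp x (f := M) hpi
  simp only [Function.comp_def, ← Matrix.nonsing_inv_eq_ringInverse] at hinv
  refine (hasFDerivAt_pi'.1 (hasFDerivAt_pi'.1 hinv i) j).congr_fderiv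
    (ContinuousLinearMap.ext fun v => ?_)
  have hunit_inv : (↑hunit.unit⁻¹ : Matrix n n ℝ) = (M x)⁻¹ := by
    rw [Matrix.coe_units_inv, hunit.unit_spec]
  change (-((↑hunit.unit⁻¹ : Matrix n n ℝ) * (Matrix.of fun p q => M' p q v) *
    (↑hunit.unit⁻¹ : Matrix n n ℝ))) i j = _
  simp [hunit_inv, Matrix.mul_apply, Finset.sum_mul, mul_right_comm]

end

theorem inv_apply_eq_inv_det_mul {R : Type*} [Field R] (M : Matrix n n R) (i j : n) :
    M⁻¹ i j = M.det⁻¹ * M.adjugate i j := by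
  rw [Matrix.inv_def, Ring.inverse_eq_inv', Matrix.smul_apply, smul_eq_mul]

theorem normalizeDiag_eq_conj (K : Matrix n n ℝ) :
    normalizeDiag K =
      Matrix.diagonal (fun i => (√(K i i))⁻¹) * K * Matrix.diagonal (fun i => (√(K i i))⁻¹) := by
  ext i j
  rw [Matrix.mul_diagonal, Matrix.diagonal_mul, normalizeDiag, Matrix.of_apply, div_eq_mul_inv,
    mul_inv]
  ring

theorem det_normalizeDiag_neg {K : Matrix n n ℝ} (hpos : ∀ i, 0 < K i i) (hdet : K.det < 0) :
    (normalizeDiag K).det < 0 := by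
  have hscale : 0 < ∏ i, (√(K i i))⁻¹ :=
    Finset.prod_pos fun i _ => inv_pos.2 (Real.sqrt_pos.2 (hpos i))
  rw [normalizeDiag_eq_conj, Matrix.det_mul, Matrix.det_mul, Matrix.det_diagonal]
  exact mul_neg_of_neg_of_pos (mul_neg_of_pos_of_neg hscale hdet) hscale

theorem inv_normalizeDiag_apply {K : Matrix n n ℝ} (hpos : ∀ i, 0 < K i i) (i j : n) :
    (normalizeDiag K)⁻¹ i j = √(K i i) * K⁻¹ i j * √(K j j) := by
  have hdiag : (Matrix.diagonal fun i => (√(K i i))⁻¹)⁻¹ = Matrix.diagonal fun i => √(K i i) := by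
    refine Matrix.inv_eq_right_inv ?_
    rw [Matrix.diagonal_mul_diagonal, ← Matrix.diagonal_one]
    exact congrArg _ (funext fun i => inv_mul_cancel₀ (Real.sqrt_pos.2 (hpos i)).ne')
  rw [normalizeDiag_eq_conj, Matrix.mul_inv_rev, Matrix.mul_inv_rev, hdiag, ← mul_assoc,
    Matrix.mul_diagonal, Matrix.diagonal_mul]

theorem inv_normalizeDiag_inv_diag {M : Matrix n n ℝ} (hM : IsUnitGram M) (hunit : IsUnit M)
    (hpos : ∀ i, 0 < M⁻¹ i i) (i : n) : (normalizeDiag M⁻¹)⁻¹ i i = M⁻¹ i i := by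
  rw [inv_normalizeDiag_apply hpos,
    Matrix.nonsing_inv_nonsing_inv _ (M.isUnit_iff_isUnit_det.1 hunit), hM.diag, mul_one,
    Real.mul_self_sqrt (hpos i).le]

theorem normalizeDiag_inv_normalizeDiag_inv {M : Matrix n n ℝ} (hM : IsUnitGram M)
    (hunit : IsUnit M) (hpos : ∀ i, 0 < M⁻¹ i i) :
    normalizeDiag (normalizeDiag M⁻¹)⁻¹ = M := by
  ext i j
  have hi := (Real.sqrt_pos.2 (hpos i)).ne'
  have hj := (Real.sqrt_pos.2 (hpos j)).ne'
  rw [normalizeDiag, Matrix.of_apply, inv_normalizeDiag_inv_diag hM hunit hpos,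
    inv_normalizeDiag_inv_diag hM hunit hpos, inv_normalizeDiag_apply hpos,
    Matrix.nonsing_inv_nonsing_inv _ (M.isUnit_iff_isUnit_det.1 hunit)]
  field_simp

theorem IsUnitGram.eq_zero_of_inv_mul_mul_inv_eq {H W : Matrix n n ℝ} (hH : IsUnitGram H)
    (hunit : IsUnit H) (hW : ∀ i, W i i = 0) {m : n → ℝ}
    (h : ∀ i j, (H⁻¹ * W * H⁻¹) i j = (m i + m j) * H⁻¹ i j) : W = 0 := by
  have hdet := H.isUnit_iff_isUnit_det.1 hunit
  have hKWK : H⁻¹ * W * H⁻¹ = Matrix.diagonal m * H⁻¹ + H⁻¹ * Matrix.diagonal m := by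
    ext i j
    rw [h, Matrix.add_apply, Matrix.diagonal_mul, Matrix.mul_diagonal]
    ring
  have hWm : W = H * Matrix.diagonal m + Matrix.diagonal m * H := by
    calc W = H * (H⁻¹ * W * H⁻¹) * H := by
          simp only [mul_assoc, Matrix.nonsing_inv_mul H hdet, mul_one,
            Matrix.mul_nonsing_inv_cancel_left _ _ hdet]
      _ = H * Matrix.diagonal m + Matrix.diagonal m * H := by
          rw [hKWK, mul_add, add_mul, mul_assoc, mul_assoc, Matrix.nonsing_inv_mul H hdet, mul_one,
            Matrix.mul_nonsing_inv_cancel_left _ _ hdet]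
  have hm : m = 0 := by
    ext i
    have := hW i
    rw [hWm, Matrix.add_apply, Matrix.mul_diagonal, Matrix.diagonal_mul, hH.diag] at this
    simp only [Pi.zero_apply]
    linarith
  rw [hWm, hm]
  simp

end UnitGram

section FourByFour

theorem IsUnitGram.submatrix {m n R : Type*} [One R] {M : Matrix n n R} (hM : IsUnitGram M)
    (f : m → n) : IsUnitGram (M.submatrix f f) where
  isSymm := hM.isSymm.submatrix f
  diag i := hM.diag (f i)

namespace IsUnitGram

section Adjugate

variable {R : Type*} [CommRing R] {M : Matrix (Fin 4) (Fin 4) R}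

theorem adjugate_three_three (hM : IsUnitGram M) (σ : Equiv.Perm (Fin 4)) :
    M.adjugate (σ 3) (σ 3) = (1 - M (σ 0) (σ 1) ^ 2) * (1 - M (σ 1) (σ 2) ^ 2) -
      (M (σ 0) (σ 1) * M (σ 1) (σ 2) - M (σ 0) (σ 2)) ^ 2 := by
  wlog hσ : σ = 1 generalizing M σ
  · simpa [Matrix.adjugate_submatrix_equiv_self] using this (hM.submatrix σ) 1 rfl
  subst hσ
  simp only [Equiv.Perm.one_apply, Matrix.adjugate_fin_succ_eq_det_submatrix, Matrix.det_fin_three]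
  simp [Fin.succAbove, hM.diag, hM.isSymm.apply 0 1, hM.isSymm.apply 0 2, hM.isSymm.apply 1 2]
  ring

theorem adjugate_two_two (hM : IsUnitGram M) (σ : Equiv.Perm (Fin 4)) :
    M.adjugate (σ 2) (σ 2) = (1 - M (σ 0) (σ 1) ^ 2) * (1 - M (σ 1) (σ 3) ^ 2) -
      (M (σ 0) (σ 1) * M (σ 1) (σ 3) - M (σ 0) (σ 3)) ^ 2 := by
  have h0 : Equiv.swap (2 : Fin 4) 3 0 = 0 := by decide
  have h1 : Equiv.swap (2 : Fin 4) 3 1 = 1 := by decide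
  simpa only [Equiv.trans_apply, Equiv.swap_apply_left, Equiv.swap_apply_right, h0, h1]
    using hM.adjugate_three_three ((Equiv.swap 2 3).trans σ)

theorem adjugate_two_three (hM : IsUnitGram M) (σ : Equiv.Perm (Fin 4)) :
    M.adjugate (σ 2) (σ 3) =
      (1 - M (σ 0) (σ 1) ^ 2) * (M (σ 1) (σ 2) * M (σ 1) (σ 3) - M (σ 2) (σ 3)) +
        (M (σ 0) (σ 1) * M (σ 1) (σ 2) - M (σ 0) (σ 2)) *
          (M (σ 0) (σ 1) * M (σ 1) (σ 3) - M (σ 0) (σ 3)) := by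
  wlog hσ : σ = 1 generalizing M σ
  · simpa [Matrix.adjugate_submatrix_equiv_self] using this (hM.submatrix σ) 1 rfl
  subst hσ
  simp only [Equiv.Perm.one_apply, Matrix.adjugate_fin_succ_eq_det_submatrix, Matrix.det_fin_three]
  simp [Fin.succAbove, hM.diag, hM.isSymm.apply 0 1, hM.isSymm.apply 0 2, hM.isSymm.apply 1 2]
  ring

theorem det_mul_one_sub_sq (hM : IsUnitGram M) (σ : Equiv.Perm (Fin 4)) :
    M.det * (1 - M (σ 0) (σ 1) ^ 2) =
      M.adjugate (σ 2) (σ 2) * M.adjugate (σ 3) (σ 3) - M.adjugate (σ 2) (σ 3) ^ 2 := by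
  wlog hσ : σ = 1 generalizing M σ
  · simpa [Matrix.adjugate_submatrix_equiv_self] using this (hM.submatrix σ) 1 rfl
  subst hσ
  simp only [Equiv.Perm.one_apply, Matrix.adjugate_fin_succ_eq_det_submatrix, Matrix.det_fin_three,
    Matrix.det_succ_row_zero (n := 3)]
  simp [Fin.sum_univ_succ, Fin.succAbove, hM.diag, hM.isSymm.apply 0 1, hM.isSymm.apply 0 2,
    hM.isSymm.apply 0 3, hM.isSymm.apply 1 2, hM.isSymm.apply 1 3, hM.isSymm.apply 2 3]
  ring

theorem det_mul_mul_sub (hM : IsUnitGram M) (σ : Equiv.Perm (Fin 4)) :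
    M.det * (M (σ 0) (σ 2) * M (σ 0) (σ 3) - M (σ 2) (σ 3)) =
      M.adjugate (σ 1) (σ 1) * M.adjugate (σ 2) (σ 3) -
        M.adjugate (σ 1) (σ 2) * M.adjugate (σ 1) (σ 3) := by
  wlog hσ : σ = 1 generalizing M σ
  · simpa [Matrix.adjugate_submatrix_equiv_self] using this (hM.submatrix σ) 1 rfl
  subst hσ
  simp only [Equiv.Perm.one_apply, Matrix.adjugate_fin_succ_eq_det_submatrix, Matrix.det_fin_three,
    Matrix.det_succ_row_zero (n := 3)]
  simp [Fin.sum_univ_succ, Fin.succAbove, hM.diag, hM.isSymm.apply 0 1, hM.isSymm.apply 0 2,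
    hM.isSymm.apply 0 3, hM.isSymm.apply 1 2, hM.isSymm.apply 1 3, hM.isSymm.apply 2 3]
  ring

end Adjugate

theorem det_mul_inv_minor {R : Type*} [Field R] {M : Matrix (Fin 4) (Fin 4) R}
    (hM : IsUnitGram M) (hdet : M.det ≠ 0) (σ : Equiv.Perm (Fin 4)) :
    M.det * (M⁻¹ (σ 2) (σ 2) * M⁻¹ (σ 3) (σ 3) - M⁻¹ (σ 2) (σ 3) ^ 2) = 1 - M (σ 0) (σ 1) ^ 2 := by
  have hadj := hM.det_mul_one_sub_sq σ
  simp only [inv_apply_eq_inv_det_mul]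
  field_simp
  linear_combination -hadj

variable {M : Matrix (Fin 4) (Fin 4) ℝ}

theorem adjugate_gt_mul (hM : IsUnitGram M) (hsq : ∀ i j, i ≠ j → M i j ^ 2 < 1)
    (hlt : ∀ i j k, i ≠ j → j ≠ k → i ≠ k → M i k < M i j * M j k) (σ : Equiv.Perm (Fin 4)) :
    (M (σ 0) (σ 1) * M (σ 1) (σ 2) - M (σ 0) (σ 2)) *
      (M (σ 0) (σ 1) * M (σ 1) (σ 3) - M (σ 0) (σ 3)) < M.adjugate (σ 2) (σ 3) := by
  have hne : ∀ {i j}, i ≠ j → σ i ≠ σ j := fun h => σ.injective.ne h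
  rw [hM.adjugate_two_three, lt_add_iff_pos_left]
  refine mul_pos (sub_pos.2 (hsq _ _ (hne (by decide)))) (sub_pos.2 ?_)
  rw [← hM.isSymm.apply (σ 1) (σ 2)]
  exact hlt _ _ _ (hne (by decide)) (hne (by decide)) (hne (by decide))

theorem adjugate_pos (hM : IsUnitGram M) (hsq : ∀ i j, i ≠ j → M i j ^ 2 < 1)
    (hlt : ∀ i j k, i ≠ j → j ≠ k → i ≠ k → M i k < M i j * M j k) (σ : Equiv.Perm (Fin 4)) :
    0 < M.adjugate (σ 2) (σ 3) := by
  have hne : ∀ {i j}, i ≠ j → σ i ≠ σ j := fun h => σ.injective.ne h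
  refine lt_trans (mul_pos ?_ ?_) (hM.adjugate_gt_mul hsq hlt σ) <;>
    exact sub_pos.2 (hlt _ _ _ (hne (by decide)) (hne (by decide)) (hne (by decide)))

theorem det_neg (hM : IsUnitGram M) (hsq : ∀ i j, i ≠ j → M i j ^ 2 < 1)
    (hlt : ∀ i j k, i ≠ j → j ≠ k → i ≠ k → M i k < M i j * M j k)
    (hdiag : ∀ i, M.adjugate i i < 0) : M.det < 0 := by
  have h3 := hM.adjugate_three_three 1
  have h2 := hM.adjugate_two_two 1
  have h23 := hM.adjugate_gt_mul hsq hlt 1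
  have hdet := hM.det_mul_one_sub_sq 1
  simp only [Equiv.Perm.one_apply] at h2 h3 h23 hdet
  have h01 : 0 < 1 - M 0 1 ^ 2 := sub_pos.2 (hsq 0 1 (by decide))
  have h12 : 0 < 1 - M 1 2 ^ 2 := sub_pos.2 (hsq 1 2 (by decide))
  have h13 : 0 < 1 - M 1 3 ^ 2 := sub_pos.2 (hsq 1 3 (by decide))
  set Y := M 0 1 * M 1 2 - M 0 2
  set Z := M 0 1 * M 1 3 - M 0 3
  have hY : 0 < Y := sub_pos.2 (hlt 0 1 2 (by decide) (by decide) (by decide))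
  have hZ : 0 < Z := sub_pos.2 (hlt 0 1 3 (by decide) (by decide) (by decide))
  have hprod : M.adjugate 2 2 * M.adjugate 3 3 < M.adjugate 2 3 ^ 2 :=
    calc M.adjugate 2 2 * M.adjugate 3 3 = -M.adjugate 2 2 * -M.adjugate 3 3 := by ring
      _ < Z ^ 2 * Y ^ 2 := by
          refine mul_lt_mul'' ?_ ?_ (by linarith [hdiag 2]) (by linarith [hdiag 3])
          · rw [h2]; linarith [mul_pos h01 h13]
          · rw [h3]; linarith [mul_pos h01 h12]
      _ = (Y * Z) ^ 2 := by ring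
      _ ≤ M.adjugate 2 3 ^ 2 := pow_le_pow_left₀ (mul_pos hY hZ).le h23.le 2
  exact neg_of_mul_neg_left (hdet ▸ sub_neg.2 hprod) h01.le

end IsUnitGram
end FourByFour

section Trig
variable {α β γ : ℝ}

theorem sin_mul_sin_lt_iff (hβ : β ∈ Ioo 0 Real.pi) (hγ : γ ∈ Ioo 0 Real.pi) :
    Real.sin β * Real.sin γ < Real.cos α + Real.cos β * Real.cos γ ↔
      0 < Real.cos α + Real.cos β * Real.cos γ ∧
        0 < 2 * Real.cos α * Real.cos β * Real.cos γ + Real.cos α ^ 2 + Real.cos β ^ 2 +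
          Real.cos γ ^ 2 - 1 := by
  have hsin : 0 < Real.sin β * Real.sin γ :=
    mul_pos (Real.sin_pos_of_mem_Ioo hβ) (Real.sin_pos_of_mem_Ioo hγ)
  have hsq : (Real.cos α + Real.cos β * Real.cos γ) ^ 2 - (Real.sin β * Real.sin γ) ^ 2 =
      2 * Real.cos α * Real.cos β * Real.cos γ + Real.cos α ^ 2 + Real.cos β ^ 2 +
        Real.cos γ ^ 2 - 1 := by
    rw [mul_pow (Real.sin β), Real.sin_sq, Real.sin_sq]
    ring
  rw [← hsq, sub_pos]
  exact ⟨fun h => ⟨hsin.trans h, by gcongr⟩, fun h => lt_of_pow_lt_pow_left₀ 2 h.1.le h.2⟩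

theorem add_add_lt_pi_iff (hα : α ∈ Ioo 0 Real.pi) (hβ : β ∈ Ioo 0 Real.pi)
    (hγ : γ ∈ Ioo 0 Real.pi) :
    α + β + γ < Real.pi ↔ Real.sin β * Real.sin γ < Real.cos α + Real.cos β * Real.cos γ ∧
      Real.sin α * Real.sin γ < Real.cos β + Real.cos α * Real.cos γ := by
  obtain ⟨hα₀, hαπ⟩ := hα
  obtain ⟨hβ₀, hβπ⟩ := hβ
  obtain ⟨hγ₀, hγπ⟩ := hγ
  have hcos : ∀ x y z : ℝ, Real.sin y * Real.sin z < Real.cos x + Real.cos y * Real.cos z ↔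
      Real.cos (Real.pi - (y + z)) < Real.cos x := fun x y z => by
    rw [Real.cos_pi_sub, Real.cos_add]
    constructor <;> intro h <;> linarith
  rw [hcos, hcos]
  constructor
  · intro h
    exact ⟨Real.cos_lt_cos_of_nonneg_of_le_pi hα₀.le (by linarith) (by linarith),
      Real.cos_lt_cos_of_nonneg_of_le_pi hβ₀.le (by linarith) (by linarith)⟩
  · have hlt : ∀ {x y : ℝ}, 0 < x → x < Real.pi → |y| ≤ Real.pi → Real.cos y < Real.cos x →
        x < |y| := fun hx hxπ hy h => by
      rw [← Real.cos_abs] at h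
      exact (Real.strictAntiOn_cos.lt_iff_gt ⟨abs_nonneg _, hy⟩ ⟨hx.le, hxπ.le⟩).1 h
    rintro ⟨h₁, h₂⟩
    have h₁ := hlt hα₀ hαπ (abs_le.2 ⟨by linarith, by linarith⟩) h₁
    have h₂ := hlt hβ₀ hβπ (abs_le.2 ⟨by linarith, by linarith⟩) h₂
    rcases lt_abs.1 h₁ with h₁ | h₁ <;> rcases lt_abs.1 h₂ with h₂ | h₂ <;> linarith

end Trig

section Edges

/-- The first endpoint of the edge with index `e`, in the numbering of `eIdx`. -/
def edgeFst : Fin 6 → Fin 4 := ![0, 0, 0, 1, 1, 2]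

/-- The second endpoint of the edge with index `e`, in the numbering of `eIdx`. -/
def edgeSnd : Fin 6 → Fin 4 := ![1, 2, 3, 2, 3, 3]

theorem edgeFst_ne_edgeSnd : ∀ e, edgeFst e ≠ edgeSnd e := by decide

theorem eIdx_edgeFst_edgeSnd : ∀ e, eIdx (edgeFst e) (edgeSnd e) = e := by decide

theorem eIdx_comm : ∀ i j, eIdx i j = eIdx j i := by decide

-- With the edges in lexicographic order, reversal of indices exchanges opposite edges.
theorem rev_eIdx : ∀ {i j k h : Fin 4}, [i, j, k, h].Nodup → (eIdx i j).rev = eIdx k h := by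
  decide

theorem exists_perm_apply_eq {i j k h : Fin 4} (hd : [i, j, k, h].Nodup) :
    ∃ σ : Equiv.Perm (Fin 4), σ 0 = i ∧ σ 1 = j ∧ σ 2 = k ∧ σ 3 = h := by
  have hinj : Function.Injective ![i, j, k, h] := List.nodup_ofFn.1 (by simpa using hd)
  exact ⟨Equiv.ofBijective _ (Finite.injective_iff_bijective.1 hinj), rfl, rfl, rfl, rfl⟩

theorem exists_perm_apply_eq_of_ne {i j k : Fin 4} (hij : i ≠ j) (hjk : j ≠ k) (hik : i ≠ k) :
    ∃ σ : Equiv.Perm (Fin 4), σ 0 = i ∧ σ 1 = j ∧ σ 2 = k := by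
  have hfourth : ∀ i j k : Fin 4, i ≠ j → j ≠ k → i ≠ k → ∃ h, [i, j, k, h].Nodup := by decide
  obtain ⟨h, hd⟩ := hfourth i j k hij hjk hik
  obtain ⟨σ, h0, h1, h2, -⟩ := exists_perm_apply_eq hd
  exact ⟨σ, h0, h1, h2⟩

theorem exists_perm_of_edge (e : Fin 6) : ∃ σ : Equiv.Perm (Fin 4),
    σ 0 = edgeFst e ∧ σ 1 = edgeSnd e ∧ σ 2 = edgeFst e.rev ∧ σ 3 = edgeSnd e.rev := by
  revert e
  decide

theorem apply_edgeFst_edgeSnd {α : Type*} {g : Fin 4 → Fin 4 → α} (hg : ∀ i j, g i j = g j i)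
    {i j : Fin 4} (hij : i ≠ j) : g (edgeFst (eIdx i j)) (edgeSnd (eIdx i j)) = g i j := by
  have hends : ∀ i j, i ≠ j → (edgeFst (eIdx i j) = i ∧ edgeSnd (eIdx i j) = j) ∨
    (edgeFst (eIdx i j) = j ∧ edgeSnd (eIdx i j) = i) := by decide
  rcases hends i j hij with ⟨h₁, h₂⟩ | ⟨h₁, h₂⟩
  · rw [h₁, h₂]
  · rw [h₁, h₂, hg]

theorem eq_or_eq_rev_or_exists_eIdx (e f : Fin 6) : e = f ∨ f = e.rev ∨
    ∃ σ : Equiv.Perm (Fin 4), e = eIdx (σ 0) (σ 1) ∧ f = eIdx (σ 0) (σ 2) := by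
  have hshare : ∀ e f : Fin 6, e = f ∨ f = e.rev ∨
      ∃ i j k, i ≠ j ∧ j ≠ k ∧ i ≠ k ∧ e = eIdx i j ∧ f = eIdx i k := by decide
  rcases hshare e f with h | h | ⟨i, j, k, hij, hjk, hik, he, hf⟩
  · exact .inl h
  · exact .inr (.inl h)
  · obtain ⟨σ, rfl, rfl, rfl⟩ := exists_perm_apply_eq_of_ne hij hjk hik
    exact .inr (.inr ⟨σ, he, hf⟩)

theorem sum_toMat_apply (a : Fin 6 → ℝ) (σ : Equiv.Perm (Fin 4)) :
    ∑ j, toMat a (σ 3) j =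
      a (eIdx (σ 0) (σ 3)) + a (eIdx (σ 1) (σ 3)) + a (eIdx (σ 2) (σ 3)) := by
  rw [← Equiv.sum_comp σ, Fin.sum_univ_four]
  simp [toMat, σ.injective.eq_iff, eIdx_comm (σ 3)]

/-- The symmetric `4 × 4` matrix with unit diagonal and with the entry `-x e` at the edge `e`: the
Gram matrix of the outward face normals of a hyperideal tetrahedron, `x` being the cosines of the
dihedral angles, or that of its vertices in de Sitter space, `x` being the hyperbolic cosines of the
edge lengths. -/
def edgeGram (x : Fin 6 → ℝ) : Matrix (Fin 4) (Fin 4) ℝ :=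
  Matrix.of fun i j => if i = j then 1 else -x (eIdx i j)

theorem edgeGram_apply (x : Fin 6 → ℝ) {i j : Fin 4} (hij : i ≠ j) :
    edgeGram x i j = -x (eIdx i j) := by
  rw [edgeGram, Matrix.of_apply, if_neg hij]

theorem isUnitGram_edgeGram (x : Fin 6 → ℝ) : IsUnitGram (edgeGram x) where
  isSymm := Matrix.IsSymm.ext fun i j => by
    simp only [edgeGram, Matrix.of_apply, eIdx_comm i j, eq_comm (a := i)]
  diag i := by simp [edgeGram]

end Edges

section Angles

/-- The Gram matrix of the face normals of a tetrahedron with dihedral angles `a`. Face `i` is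
opposite to vertex `i`, so the faces `i` and `j` meet along the edge opposite to `{i, j}`. -/
noncomputable def dihedralGram (a : Fin 6 → ℝ) : Matrix (Fin 4) (Fin 4) ℝ :=
  edgeGram fun e => Real.cos (a e.rev)

/-- The length of the edge `e` of the hyperideal tetrahedron with dihedral angles `a`. -/
noncomputable def edgeLength (a : Fin 6 → ℝ) (e : Fin 6) : ℝ :=
  Real.arcosh (-normalizeDiag (dihedralGram a)⁻¹ (edgeFst e) (edgeSnd e))

/-- The dihedral angles of hyperideal tetrahedra: positive, with sum less than `π` at each
vertex. -/
def anglePolytope : Set (Fin 6 → ℝ) :=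
  {a | (∀ e, 0 < a e) ∧ ∀ i, ∑ j, toMat a i j < Real.pi}

theorem convex_anglePolytope : Convex ℝ anglePolytope := by
  have hlin : ∀ i, IsLinearMap ℝ fun a : Fin 6 → ℝ => ∑ j, toMat a i j := fun i => by
    refine ⟨fun a b => ?_, fun c a => ?_⟩
    · rw [← Finset.sum_add_distrib]
      exact Finset.sum_congr rfl fun j _ => by unfold toMat; split <;> simp
    · rw [smul_eq_mul, Finset.mul_sum]
      exact Finset.sum_congr rfl fun j _ => by unfold toMat; split <;> simp
  have hproj : ∀ e, IsLinearMap ℝ fun a : Fin 6 → ℝ => a e :=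
    fun e => ⟨fun _ _ => rfl, fun _ _ => rfl⟩
  simp only [anglePolytope, ofPred_and, ofPred_forall]
  exact (convex_iInter fun e => convex_halfSpace_gt (hproj e) 0).inter
    (convex_iInter fun i => convex_halfSpace_lt (hlin i) Real.pi)

theorem isOpen_anglePolytope : IsOpen anglePolytope := by
  have hcont : ∀ i j, Continuous fun a : Fin 6 → ℝ => toMat a i j := fun i j => by
    unfold toMat
    split <;> fun_prop
  simp only [anglePolytope, ofPred_and, ofPred_forall]
  exact (isOpen_iInter_of_finite fun e => isOpen_lt continuous_const (continuous_apply e)).inter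
    (isOpen_iInter_of_finite fun i =>
      isOpen_lt (continuous_finsetSum _ fun j _ => hcont i j) continuous_const)

variable {a : Fin 6 → ℝ}

theorem mem_Ioo_of_mem_anglePolytope (ha : a ∈ anglePolytope) (e : Fin 6) :
    a e ∈ Ioo 0 Real.pi := by
  have hvertex : a e ≤ ∑ j, toMat a (edgeFst e) j := by
    have hle := Finset.single_le_sum (f := toMat a (edgeFst e))
      (fun j _ => by unfold toMat; split <;> simp [(ha.1 _).le]) (Finset.mem_univ (edgeSnd e))
    rwa [toMat, if_neg (edgeFst_ne_edgeSnd e), eIdx_edgeFst_edgeSnd] at hle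
  exact ⟨ha.1 e, hvertex.trans_lt (ha.2 _)⟩

theorem sin_pos_of_mem_anglePolytope (ha : a ∈ anglePolytope) (e : Fin 6) :
    0 < Real.sin (a e) :=
  Real.sin_pos_of_mem_Ioo (mem_Ioo_of_mem_anglePolytope ha e)

theorem isBounded_anglePolytope : Bornology.IsBounded anglePolytope :=
  (Metric.isBounded_Icc (fun _ => 0) fun _ => Real.pi).subset fun _ ha =>
    ⟨fun e => (ha.1 e).le, fun e => (mem_Ioo_of_mem_anglePolytope ha e).2.le⟩

theorem isUnitGram_dihedralGram (a : Fin 6 → ℝ) : IsUnitGram (dihedralGram a) :=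
  isUnitGram_edgeGram _

theorem dihedralGram_apply (a : Fin 6 → ℝ) {i j k h : Fin 4} (hd : [i, j, k, h].Nodup) :
    dihedralGram a i j = -Real.cos (a (eIdx k h)) := by
  have hij : i ≠ j := by simp_all
  rw [dihedralGram, edgeGram_apply _ hij, rev_eIdx hd]

theorem vertex_sum_lt_pi_iff (ha : ∀ e, a e ∈ Ioo 0 Real.pi) (σ : Equiv.Perm (Fin 4)) :
    ∑ j, toMat a (σ 3) j < Real.pi ↔
      dihedralGram a (σ 1) (σ 2) < dihedralGram a (σ 1) (σ 0) * dihedralGram a (σ 0) (σ 2) ∧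
      dihedralGram a (σ 0) (σ 2) < dihedralGram a (σ 0) (σ 1) * dihedralGram a (σ 1) (σ 2) ∧
      (dihedralGram a).adjugate (σ 3) (σ 3) < 0 := by
  have hM := isUnitGram_dihedralGram a
  have hd : ∀ {l : List (Fin 4)}, l.Nodup → (l.map σ).Nodup := fun h => h.map σ.injective
  have h01 := dihedralGram_apply a (hd (show [0, 1, 2, 3].Nodup by decide))
  have h12 := dihedralGram_apply a (hd (show [1, 2, 0, 3].Nodup by decide))
  have h02 := dihedralGram_apply a (hd (show [0, 2, 1, 3].Nodup by decide))
  rw [sum_toMat_apply, add_add_lt_pi_iff (ha _) (ha _) (ha _), sin_mul_sin_lt_iff (ha _) (ha _),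
    sin_mul_sin_lt_iff (ha _) (ha _), hM.adjugate_three_three,
    hM.isSymm.apply (σ 0) (σ 1), h01, h12, h02]
  constructor
  · rintro ⟨⟨h₁, h₂⟩, h₃, -⟩
    exact ⟨by linarith, by linarith, by linarith⟩
  · rintro ⟨h₁, h₂, h₃⟩
    exact ⟨⟨by linarith, by linarith⟩, by linarith, by linarith⟩

theorem mem_anglePolytope_iff (ha : ∀ e, a e ∈ Ioo 0 Real.pi) :
    a ∈ anglePolytope ↔
      (∀ i j k, i ≠ j → j ≠ k → i ≠ k →
        dihedralGram a i k < dihedralGram a i j * dihedralGram a j k) ∧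
      ∀ i, (dihedralGram a).adjugate i i < 0 := by
  have hσ : ∀ i : Fin 4, ∃ σ : Equiv.Perm (Fin 4), σ 3 = i := fun i => ⟨Equiv.swap 3 i, by simp⟩
  constructor
  · intro h
    refine ⟨fun i j k hij hjk hik => ?_, fun i => ?_⟩
    · obtain ⟨σ, rfl, rfl, rfl⟩ := exists_perm_apply_eq_of_ne hij hjk hik
      exact ((vertex_sum_lt_pi_iff ha σ).1 (h.2 _)).2.1
    · obtain ⟨σ, rfl⟩ := hσ i
      exact ((vertex_sum_lt_pi_iff ha σ).1 (h.2 _)).2.2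
  · rintro ⟨hlt, hadj⟩
    refine ⟨fun e => (ha e).1, fun i => ?_⟩
    obtain ⟨σ, rfl⟩ := hσ i
    have hne : ∀ {i j}, i ≠ j → σ i ≠ σ j := fun h => σ.injective.ne h
    exact (vertex_sum_lt_pi_iff ha σ).2
      ⟨hlt _ _ _ (hne (by decide)) (hne (by decide)) (hne (by decide)),
        hlt _ _ _ (hne (by decide)) (hne (by decide)) (hne (by decide)), hadj _⟩

theorem sq_dihedralGram_lt_one (ha : a ∈ anglePolytope) {i j : Fin 4} (hij : i ≠ j) :
    dihedralGram a i j ^ 2 < 1 := by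
  rw [dihedralGram, edgeGram_apply _ hij, neg_sq]
  have hsin := sin_pos_of_mem_anglePolytope ha (eIdx i j).rev
  linarith [Real.sin_sq_add_cos_sq (a (eIdx i j).rev), pow_pos hsin 2]

theorem det_dihedralGram_neg (ha : a ∈ anglePolytope) : (dihedralGram a).det < 0 := by
  obtain ⟨hlt, hadj⟩ := (mem_anglePolytope_iff (mem_Ioo_of_mem_anglePolytope ha)).1 ha
  exact (isUnitGram_dihedralGram a).det_neg (fun _ _ => sq_dihedralGram_lt_one ha) hlt hadj

theorem isUnit_dihedralGram (ha : a ∈ anglePolytope) : IsUnit (dihedralGram a) :=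
  (Matrix.isUnit_iff_isUnit_det _).2 (det_dihedralGram_neg ha).ne.isUnit

theorem inv_dihedralGram_diag_pos (ha : a ∈ anglePolytope) (i : Fin 4) :
    0 < (dihedralGram a)⁻¹ i i := by
  obtain ⟨-, hadj⟩ := (mem_anglePolytope_iff (mem_Ioo_of_mem_anglePolytope ha)).1 ha
  rw [inv_apply_eq_inv_det_mul]
  exact mul_pos_of_neg_of_neg (inv_lt_zero.2 (det_dihedralGram_neg ha)) (hadj i)

theorem inv_dihedralGram_edge_neg (ha : a ∈ anglePolytope) (e : Fin 6) :
    (dihedralGram a)⁻¹ (edgeFst e) (edgeSnd e) < 0 := by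
  obtain ⟨hlt, -⟩ := (mem_anglePolytope_iff (mem_Ioo_of_mem_anglePolytope ha)).1 ha
  have hadj : 0 < (dihedralGram a).adjugate (edgeFst e) (edgeSnd e) := by
    obtain ⟨σ, -, -, h2, h3⟩ := exists_perm_of_edge e.rev
    rw [Fin.rev_rev] at h2 h3
    rw [← h2, ← h3]
    exact (isUnitGram_dihedralGram a).adjugate_pos (fun _ _ => sq_dihedralGram_lt_one ha) hlt σ
  rw [inv_apply_eq_inv_det_mul]
  exact mul_neg_of_neg_of_pos (inv_lt_zero.2 (det_dihedralGram_neg ha)) hadj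

theorem inv_dihedralGram_minor (ha : a ∈ anglePolytope) {i j : Fin 4} (hij : i ≠ j) :
    -(dihedralGram a).det * ((dihedralGram a)⁻¹ i j ^ 2 -
      (dihedralGram a)⁻¹ i i * (dihedralGram a)⁻¹ j j) = Real.sin (a (eIdx i j)) ^ 2 := by
  have hother : ∀ i j : Fin 4, i ≠ j → ∃ k h, [k, h, i, j].Nodup := by decide
  obtain ⟨k, h, hd⟩ := hother i j hij
  obtain ⟨σ, rfl, rfl, rfl, rfl⟩ := exists_perm_apply_eq hd
  have hminor := (isUnitGram_dihedralGram a).det_mul_inv_minor (det_dihedralGram_neg ha).ne σ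
  rw [dihedralGram_apply a hd] at hminor
  linear_combination hminor - Real.sin_sq_add_cos_sq (a (eIdx (σ 2) (σ 3)))

theorem mul_lt_sq_inv_dihedralGram (ha : a ∈ anglePolytope) {i j : Fin 4} (hij : i ≠ j) :
    (dihedralGram a)⁻¹ i i * (dihedralGram a)⁻¹ j j < (dihedralGram a)⁻¹ i j ^ 2 := by
  have hsin := sin_pos_of_mem_anglePolytope ha (eIdx i j)
  have hminor := inv_dihedralGram_minor ha hij ▸ pow_pos hsin 2
  exact sub_pos.1 (pos_of_mul_pos_right hminor (neg_nonneg.2 (det_dihedralGram_neg ha).le))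

end Angles

section EdgeForm

/-- The coefficient of `W p q` in the derivative of `K i j / √(K i i * K j j)`, times
`√(K i i * K j j)`, along the variation `K * W * K` of `K`, where `W` is symmetric with zero
diagonal. It gives the derivative of an edge length when `K` is the inverse of a Gram matrix. -/
noncomputable def edgeForm (K : Matrix (Fin 4) (Fin 4) ℝ) (i j p q : Fin 4) : ℝ :=
  K i p * K j q + K i q * K j p - K i j * (K i p * K i q / K i i + K j p * K j q / K j j)

variable {K : Matrix (Fin 4) (Fin 4) ℝ}

theorem edgeForm_edgeFst_edgeSnd (hK : K.IsSymm) {i j p q : Fin 4} (hij : i ≠ j) (hpq : p ≠ q) :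
    edgeForm K (edgeFst (eIdx i j)) (edgeSnd (eIdx i j)) (edgeFst (eIdx p q))
      (edgeSnd (eIdx p q)) = edgeForm K i j p q := by
  rw [apply_edgeFst_edgeSnd (g := fun p q => edgeForm K _ _ p q) _ hpq,
    apply_edgeFst_edgeSnd (g := fun i j => edgeForm K i j p q) _ hij]
  · intro i j
    simp only [edgeForm, hK.apply i j]
    ring
  · intro p q
    simp only [edgeForm]
    ring

theorem mul_toMat_mul_apply (hK : K.IsSymm) (w : Fin 6 → ℝ) (i j : Fin 4) :
    (K * Matrix.of (toMat w) * K) i j =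
      ∑ f, (K i (edgeFst f) * K j (edgeSnd f) + K i (edgeSnd f) * K j (edgeFst f)) * w f := by
  simp only [Matrix.mul_apply, Matrix.of_apply, Fin.sum_univ_four, Fin.sum_univ_six, hK.apply j]
  simp [toMat, eIdx, edgeFst, edgeSnd]
  ring

theorem sum_edgeForm_mul (hK : K.IsSymm) (w : Fin 6 → ℝ) (i j : Fin 4) :
    ∑ f, edgeForm K i j (edgeFst f) (edgeSnd f) * w f =
      (K * Matrix.of (toMat w) * K) i j - K i j / 2 *
        ((K * Matrix.of (toMat w) * K) i i / K i i +
          (K * Matrix.of (toMat w) * K) j j / K j j) := by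
  simp only [mul_toMat_mul_apply hK, Finset.sum_div, Finset.mul_sum, ← Finset.sum_add_distrib,
    ← Finset.sum_sub_distrib]
  refine Finset.sum_congr rfl fun f _ => ?_
  rw [edgeForm]
  ring

theorem edgeForm_self (hK : K.IsSymm) {i j : Fin 4} (hi : K i i ≠ 0) (hj : K j j ≠ 0) :
    edgeForm K i j i j = K i i * K j j - K i j ^ 2 := by
  rw [edgeForm, hK.apply i j]
  field_simp
  ring

theorem edgeForm_of_adjacent {i j k : Fin 4} (hj : K j j ≠ 0) (hi : K i i ≠ 0) :
    edgeForm K i j j k = K i k / K i i * (K i i * K j j - K i j ^ 2) := by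
  rw [edgeForm]
  field_simp
  ring

end EdgeForm

section Derivative

theorem hasFDerivAt_arcosh_neg_div {E : Type*} [NormedAddCommGroup E] [NormedSpace ℝ E]
    {u p q : E → ℝ} {u' p' q' : E →L[ℝ] ℝ} {x : E} (hu : HasFDerivAt u u' x)
    (hp : HasFDerivAt p p' x) (hq : HasFDerivAt q q' x) (hp0 : 0 < p x) (hq0 : 0 < q x)
    (hu0 : u x < 0) (hlt : p x * q x < u x ^ 2) :
    HasFDerivAt (fun x => Real.arcosh (-(u x / (√(p x) * √(q x)))))
      ((√(u x ^ 2 - p x * q x))⁻¹ •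
        ((u x / 2) • ((p x)⁻¹ • p' + (q x)⁻¹ • q') - u')) x := by
  have hs := Real.sqrt_pos.2 hp0
  have ht := Real.sqrt_pos.2 hq0
  have hr := Real.sqrt_pos.2 (sub_pos.2 hlt)
  have hs2 := Real.sq_sqrt hp0.le
  have ht2 := Real.sq_sqrt hq0.le
  have hst : (√(p x) * √(q x)) ^ 2 = p x * q x := by rw [mul_pow, hs2, ht2]
  have hN : 1 < -(u x / (√(p x) * √(q x))) := by
    rw [← neg_div, one_lt_div (mul_pos hs ht)]
    exact lt_of_pow_lt_pow_left₀ 2 (neg_nonneg.2 hu0.le) (by rwa [hst, neg_sq])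
  have hroot : √((-(u x / (√(p x) * √(q x)))) ^ 2 - 1) =
      √(u x ^ 2 - p x * q x) / (√(p x) * √(q x)) := by
    rw [← Real.sqrt_sq (mul_pos hs ht).le, ← Real.sqrt_div' _ (sq_nonneg _), neg_sq, div_pow,
      Real.sqrt_sq (mul_pos hs ht).le, hst, sub_div, div_self (mul_pos hp0 hq0).ne']
  have hinv := (hasDerivAt_inv (mul_pos hs ht).ne').comp_hasFDerivAt x
    ((hp.sqrt hp0.ne').fun_mul (hq.sqrt hq0.ne'))
  have hderiv := (Real.hasDerivAt_arcosh hN).comp_hasFDerivAt x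
    (f := fun x => -(u x / (√(p x) * √(q x)))) (hu.fun_mul hinv).fun_neg
  refine hderiv.congr_fderiv (ContinuousLinearMap.ext fun v => ?_)
  simp only [hroot, Function.comp_apply, smul_apply, neg_apply, add_apply, sub_apply, smul_eq_mul]
  generalize √(u x ^ 2 - p x * q x) = r at hr ⊢
  generalize √(p x) = s at hs hs2 ⊢
  generalize √(q x) = t at ht ht2 ⊢
  rw [← hs2, ← ht2]
  field_simp
  ring

end Derivative

section Jacobian

/-- The Jacobian matrix of `edgeLength` at `a`. -/
noncomputable def edgeLengthJacobian (a : Fin 6 → ℝ) : Matrix (Fin 6) (Fin 6) ℝ :=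
  Matrix.of fun e f => √(-(dihedralGram a).det) / Real.sin (a e) *
    edgeForm (dihedralGram a)⁻¹ (edgeFst e) (edgeSnd e) (edgeFst f.rev) (edgeSnd f.rev) *
      Real.sin (a f)

/-- The derivative of `dihedralGram` at `a` in the direction `v`. -/
noncomputable def dihedralGramVariation (a v : Fin 6 → ℝ) : Matrix (Fin 4) (Fin 4) ℝ :=
  Matrix.of (toMat fun e => v e.rev * Real.sin (a e.rev))

variable {a : Fin 6 → ℝ}

theorem isSymm_inv_dihedralGram (a : Fin 6 → ℝ) : ((dihedralGram a)⁻¹).IsSymm :=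
  (isUnitGram_dihedralGram a).isSymm.inv

theorem edgeLengthJacobian_mulVec_apply (a v : Fin 6 → ℝ) (e : Fin 6) :
    let K := (dihedralGram a)⁻¹
    let Δ := K * dihedralGramVariation a v * K
    (edgeLengthJacobian a *ᵥ v) e = √(-(dihedralGram a).det) / Real.sin (a e) *
      (Δ (edgeFst e) (edgeSnd e) - K (edgeFst e) (edgeSnd e) / 2 *
        (Δ (edgeFst e) (edgeFst e) / K (edgeFst e) (edgeFst e) +
          Δ (edgeSnd e) (edgeSnd e) / K (edgeSnd e) (edgeSnd e))) := by
  intro K Δ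
  simp only [K, Δ, dihedralGramVariation]
  rw [← sum_edgeForm_mul (isSymm_inv_dihedralGram a), Matrix.mulVec, dotProduct, Finset.mul_sum,
    ← Equiv.sum_comp Fin.revPerm]
  refine Finset.sum_congr rfl fun f _ => ?_
  simp only [edgeLengthJacobian, Matrix.of_apply, Fin.revPerm_apply, Fin.rev_rev]
  ring

theorem hasFDerivAt_dihedralGram_apply (a : Fin 6 → ℝ) (i j : Fin 4) :
    HasFDerivAt (fun a => dihedralGram a i j) (if i = j then 0 else
      Real.sin (a (eIdx i j).rev) • ContinuousLinearMap.proj (R := ℝ) (eIdx i j).rev) a := by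
  split_ifs with hij
  · subst hij
    exact (hasFDerivAt_const 1 a).congr_of_eventuallyEq
      (.of_forall fun a => (isUnitGram_dihedralGram a).diag i)
  · simp only [dihedralGram, edgeGram_apply _ hij]
    refine ((Real.hasDerivAt_cos _).comp_hasFDerivAt a
      (hasFDerivAt_apply (𝕜 := ℝ) (eIdx i j).rev a)).fun_neg.congr_fderiv ?_
    rw [neg_smul, neg_neg]

theorem hasFDerivAt_inv_dihedralGram_apply (hunit : IsUnit (dihedralGram a)) (i j : Fin 4) :
    ∃ D : (Fin 6 → ℝ) →L[ℝ] ℝ, HasFDerivAt (fun a => (dihedralGram a)⁻¹ i j) D a ∧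
      ∀ v, D v = -((dihedralGram a)⁻¹ * dihedralGramVariation a v * (dihedralGram a)⁻¹) i j := by
  refine ⟨_, hasFDerivAt_matrix_inv_apply (hasFDerivAt_dihedralGram_apply a) hunit i j,
    fun v => ?_⟩
  simp only [neg_apply, sum_apply, smul_apply, smul_eq_mul, Matrix.mul_apply, Finset.sum_mul]
  refine congrArg _ (Finset.sum_congr rfl fun q _ => Finset.sum_congr rfl fun p _ => ?_)
  simp only [dihedralGramVariation, toMat, Matrix.of_apply]
  split_ifs
  · simp only [zero_apply, mul_zero, zero_mul]
  · simp only [smul_apply, ContinuousLinearMap.proj_apply, smul_eq_mul]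
    ring

theorem sqrt_inv_dihedralGram_minor (ha : a ∈ anglePolytope) (e : Fin 6) :
    √((dihedralGram a)⁻¹ (edgeFst e) (edgeSnd e) ^ 2 -
      (dihedralGram a)⁻¹ (edgeFst e) (edgeFst e) * (dihedralGram a)⁻¹ (edgeSnd e) (edgeSnd e)) =
      Real.sin (a e) / √(-(dihedralGram a).det) := by
  have hD : 0 < -(dihedralGram a).det := neg_pos.2 (det_dihedralGram_neg ha)
  have hsin := sin_pos_of_mem_anglePolytope ha e
  have hminor := inv_dihedralGram_minor ha (edgeFst_ne_edgeSnd e)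
  rw [eIdx_edgeFst_edgeSnd] at hminor
  rw [eq_div_iff (Real.sqrt_pos.2 hD).ne', ← Real.sqrt_mul' _ hD.le, mul_comm, hminor,
    Real.sqrt_sq hsin.le]

theorem hasFDerivAt_edgeLength (ha : a ∈ anglePolytope) (e : Fin 6) :
    HasFDerivAt (fun a => edgeLength a e) (dotProductCLM (edgeLengthJacobian a e)) a := by
  have hunit := isUnit_dihedralGram ha
  obtain ⟨u', hu, hu'⟩ := hasFDerivAt_inv_dihedralGram_apply hunit (edgeFst e) (edgeSnd e)
  obtain ⟨p', hp, hp'⟩ := hasFDerivAt_inv_dihedralGram_apply hunit (edgeFst e) (edgeFst e)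
  obtain ⟨q', hq, hq'⟩ := hasFDerivAt_inv_dihedralGram_apply hunit (edgeSnd e) (edgeSnd e)
  refine (hasFDerivAt_arcosh_neg_div hu hp hq (inv_dihedralGram_diag_pos ha _)
    (inv_dihedralGram_diag_pos ha _) (inv_dihedralGram_edge_neg ha e)
    (mul_lt_sq_inv_dihedralGram ha (edgeFst_ne_edgeSnd e))).congr_fderiv
    (ContinuousLinearMap.ext fun v => ?_)
  have hJ := edgeLengthJacobian_mulVec_apply a v e
  rw [dotProductCLM_apply]
  refine Eq.trans ?_ hJ.symm
  rw [sqrt_inv_dihedralGram_minor ha, inv_div]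
  simp only [smul_apply, sub_apply, add_apply, hu', hp', hq', smul_eq_mul]
  ring

theorem edgeLengthJacobian_of_adjacent (ha : a ∈ anglePolytope) (σ : Equiv.Perm (Fin 4)) :
    edgeLengthJacobian a (eIdx (σ 0) (σ 1)) (eIdx (σ 0) (σ 2)) =
      -((dihedralGram a)⁻¹ (σ 0) (σ 3) / (dihedralGram a)⁻¹ (σ 0) (σ 0)) *
        (Real.sin (a (eIdx (σ 0) (σ 1))) * Real.sin (a (eIdx (σ 0) (σ 2)))) /
          √(-(dihedralGram a).det) := by
  have hD : 0 < -(dihedralGram a).det := neg_pos.2 (det_dihedralGram_neg ha)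
  have hd : [σ 0, σ 2, σ 1, σ 3].Nodup :=
    List.Nodup.map σ.injective (show [0, 2, 1, 3].Nodup by decide)
  have hne : ∀ {i j}, i ≠ j → σ i ≠ σ j := fun h => σ.injective.ne h
  have hsin := sin_pos_of_mem_anglePolytope ha (eIdx (σ 0) (σ 1))
  have hminor := inv_dihedralGram_minor ha (hne (show 0 ≠ 1 by decide))
  have hK := fun i => (inv_dihedralGram_diag_pos ha i).ne'
  have hsqrt := Real.sq_sqrt hD.le
  rw [edgeLengthJacobian, Matrix.of_apply, rev_eIdx hd,
    edgeForm_edgeFst_edgeSnd (isSymm_inv_dihedralGram a) (hne (by decide)) (hne (by decide)),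
    edgeForm_of_adjacent (hK _) (hK _)]
  rw [← hsqrt] at hminor
  have := (Real.sqrt_pos.2 hD).ne'
  have := hK (σ 0)
  field_simp
  linear_combination (-(dihedralGram a)⁻¹ (σ 0) (σ 3) * Real.sin (a (eIdx (σ 0) (σ 2)))) * hminor

theorem edgeLengthJacobian_rev (ha : a ∈ anglePolytope) (e : Fin 6) :
    edgeLengthJacobian a e e.rev =
      -(Real.sin (a e) * Real.sin (a e.rev)) / √(-(dihedralGram a).det) := by
  have hD : 0 < -(dihedralGram a).det := neg_pos.2 (det_dihedralGram_neg ha)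
  have hsin := sin_pos_of_mem_anglePolytope ha e
  have hminor := inv_dihedralGram_minor ha (edgeFst_ne_edgeSnd e)
  rw [eIdx_edgeFst_edgeSnd, ← Real.sq_sqrt hD.le] at hminor
  rw [edgeLengthJacobian, Matrix.of_apply, Fin.rev_rev, edgeForm_self (isSymm_inv_dihedralGram a)
    (inv_dihedralGram_diag_pos ha _).ne' (inv_dihedralGram_diag_pos ha _).ne']
  have := (Real.sqrt_pos.2 hD).ne'
  field_simp
  linear_combination -Real.sin (a e.rev) * hminor

theorem isSymm_edgeLengthJacobian (ha : a ∈ anglePolytope) : (edgeLengthJacobian a).IsSymm := by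
  refine Matrix.IsSymm.ext fun e f => ?_
  rcases eq_or_eq_rev_or_exists_eIdx e f with rfl | rfl | ⟨σ, rfl, rfl⟩
  · rfl
  · have hrev := edgeLengthJacobian_rev ha e.rev
    rw [Fin.rev_rev] at hrev
    rw [hrev, edgeLengthJacobian_rev ha, mul_comm]
  · have hswap := edgeLengthJacobian_of_adjacent ha ((Equiv.swap 1 2).trans σ)
    have h0 : Equiv.swap (1 : Fin 4) 2 0 = 0 := by decide
    have h3 : Equiv.swap (1 : Fin 4) 2 3 = 3 := by decide
    simp only [Equiv.trans_apply, Equiv.swap_apply_left, Equiv.swap_apply_right, h0, h3] at hswap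
    rw [hswap, edgeLengthJacobian_of_adjacent ha, mul_comm (Real.sin _)]

theorem inv_mul_dihedralGramVariation_mul_inv_eq (ha : a ∈ anglePolytope) {v : Fin 6 → ℝ}
    (hv : edgeLengthJacobian a *ᵥ v = 0) (i j : Fin 4) :
    let K := (dihedralGram a)⁻¹
    let Δ := K * dihedralGramVariation a v * K
    Δ i j = (Δ i i / (2 * K i i) + Δ j j / (2 * K j j)) * K i j := by
  intro K Δ
  have hK : K.IsSymm := isSymm_inv_dihedralGram a
  have hKpos : ∀ i, 0 < K i i := inv_dihedralGram_diag_pos ha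
  have hΔ : ∀ i j, Δ i j = Δ j i := fun i j => by
    simp only [Δ, dihedralGramVariation, mul_toMat_mul_apply hK]
    exact Finset.sum_congr rfl fun f _ => by ring
  let g : Fin 4 → Fin 4 → ℝ := fun i j =>
    Δ i j - K i j / 2 * (Δ i i / K i i + Δ j j / K j j)
  have hg : ∀ i j, g i j = g j i := fun i j => by
    simp only [g, hΔ i j, hK.apply j i, add_comm]
  have hcoef : ∀ e, √(-(dihedralGram a).det) / Real.sin (a e) ≠ 0 := fun e =>
    (div_pos (Real.sqrt_pos.2 (neg_pos.2 (det_dihedralGram_neg ha)))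
      (sin_pos_of_mem_anglePolytope ha e)).ne'
  have hedge : ∀ e, g (edgeFst e) (edgeSnd e) = 0 := fun e =>
    (mul_eq_zero.1 ((edgeLengthJacobian_mulVec_apply a v e).symm.trans
      (congrFun hv e))).resolve_left (hcoef e)
  rcases eq_or_ne i j with rfl | hij
  · field_simp [(hKpos i).ne']
    ring
  · have hgij : g i j = 0 := apply_edgeFst_edgeSnd hg hij ▸ hedge (eIdx i j)
    rw [← sub_eq_zero, ← hgij]
    ring

theorem isUnit_edgeLengthJacobian (ha : a ∈ anglePolytope) : IsUnit (edgeLengthJacobian a) := by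
  refine Matrix.mulVec_injective_iff_isUnit.1
    ((injective_iff_map_eq_zero (edgeLengthJacobian a).mulVecLin).2 fun v hv => funext fun f => ?_)
  have hzero : dihedralGramVariation a v = 0 :=
    (isUnitGram_dihedralGram a).eq_zero_of_inv_mul_mul_inv_eq (isUnit_dihedralGram ha)
      (fun i => by simp [dihedralGramVariation, toMat])
      (inv_mul_dihedralGramVariation_mul_inv_eq ha hv)
  have hentry := congrFun (congrFun hzero (edgeFst f.rev)) (edgeSnd f.rev)
  have hsin := sin_pos_of_mem_anglePolytope ha f
  simpa [dihedralGramVariation, toMat, edgeFst_ne_edgeSnd, eIdx_edgeFst_edgeSnd, hsin.ne']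
    using hentry

end Jacobian

section BasePoint

/-- The dihedral angles of a regular hyperideal tetrahedron, the base point of the continuity
argument; the angle is below `π / 3` since `cos (π / 3) < 3 / 5`. -/
noncomputable def regularAngles : Fin 6 → ℝ := fun _ => Real.arccos (3 / 5)

theorem cos_regularAngles (e : Fin 6) : Real.cos (regularAngles e) = 3 / 5 :=
  Real.cos_arccos (by norm_num) (by norm_num)

theorem regularAngles_mem_anglePolytope : regularAngles ∈ anglePolytope := by
  have hlt : Real.arccos (3 / 5) < Real.pi / 3 := by
    rw [← Real.arccos_cos (x := Real.pi / 3) (by positivity) (by linarith [Real.pi_pos]),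
      Real.cos_pi_div_three]
    exact Real.arccos_lt_arccos (by norm_num) (by norm_num) (by norm_num)
  refine ⟨fun _ => Real.arccos_pos.2 (by norm_num), fun i => ?_⟩
  have hσ : Equiv.swap 3 i 3 = i := Equiv.swap_apply_left 3 i
  rw [← hσ, sum_toMat_apply]
  simp only [regularAngles]
  linarith

theorem inv_dihedralGram_regularAngles :
    (dihedralGram regularAngles)⁻¹ = Matrix.of fun i j => if i = j then 5 / 32 else -15 / 32 := by
  refine Matrix.inv_eq_right_inv (Matrix.ext fun i j => ?_)
  simp only [dihedralGram, edgeGram, cos_regularAngles, Matrix.mul_apply, Matrix.of_apply,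
    Fin.sum_univ_four, Matrix.one_apply]
  fin_cases i <;> fin_cases j <;> norm_num [Fin.ext_iff]

theorem edgeLengthJacobian_regularAngles (e f : Fin 6) :
    edgeLengthJacobian regularAngles e f = √(-(dihedralGram regularAngles).det) * (25 / 128) *
      if e = f then 9 else if f = e.rev then -1 else 3 := by
  have hsin : Real.sin (regularAngles f) ≠ 0 :=
    (sin_pos_of_mem_anglePolytope regularAngles_mem_anglePolytope f).ne'
  have hform : edgeForm (dihedralGram regularAngles)⁻¹ (edgeFst e) (edgeSnd e) (edgeFst f.rev)
      (edgeSnd f.rev) = 25 / 128 * if e = f then 9 else if f = e.rev then -1 else 3 := by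
    rw [inv_dihedralGram_regularAngles]
    simp only [edgeForm, Matrix.of_apply]
    fin_cases e <;> fin_cases f <;> norm_num [edgeFst, edgeSnd, Fin.rev, Fin.ext_iff]
  rw [edgeLengthJacobian, Matrix.of_apply, hform,
    show Real.sin (regularAngles e) = Real.sin (regularAngles f) from rfl]
  field_simp

theorem posDef_edgeLengthJacobian_regularAngles : (edgeLengthJacobian regularAngles).PosDef := by
  have ha := regularAngles_mem_anglePolytope
  have hsemi : (edgeLengthJacobian regularAngles).PosSemidef := by
    refine Matrix.PosSemidef.of_dotProduct_mulVec_nonneg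
      (Matrix.isHermitian_iff_isSymm.2 (isSymm_edgeLengthJacobian ha)) fun v => ?_
    have hsum : star v ⬝ᵥ edgeLengthJacobian regularAngles *ᵥ v =
        √(-(dihedralGram regularAngles).det) * (25 / 128) *
          (3 * (∑ e, v e) ^ 2 + 5 / 2 * ∑ e, (v e - v e.rev) ^ 2 +
            1 / 2 * ∑ e, (v e + v e.rev) ^ 2) := by
      simp only [dotProduct, Matrix.mulVec, edgeLengthJacobian_regularAngles, Fin.sum_univ_six,
        star_trivial]
      simp [Fin.rev, Fin.ext_iff]
      ring
    rw [hsum]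
    positivity
  exact hsemi.posDef_iff_isUnit.2 (isUnit_edgeLengthJacobian ha)

end BasePoint

section Volume

theorem continuousOn_edgeLengthJacobian : ContinuousOn edgeLengthJacobian anglePolytope := by
  refine continuousOn_pi.2 fun e => continuousOn_pi.2 fun f => ?_
  have hgram : Continuous dihedralGram := continuous_pi fun i => continuous_pi fun j =>
    continuous_iff_continuousAt.2 fun a => (hasFDerivAt_dihedralGram_apply a i j).continuousAt
  have hinv : ∀ i j, ContinuousOn (fun a => (dihedralGram a)⁻¹ i j) anglePolytope :=
    fun i j a ha => by
      obtain ⟨D, hD, -⟩ := hasFDerivAt_inv_dihedralGram_apply (isUnit_dihedralGram ha) i j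
      exact hD.continuousAt.continuousWithinAt
  have hne : ∀ i, ∀ a ∈ anglePolytope, (dihedralGram a)⁻¹ i i ≠ 0 := fun i a ha =>
    (inv_dihedralGram_diag_pos ha i).ne'
  have hform : ∀ i j p q,
      ContinuousOn (fun a => edgeForm (dihedralGram a)⁻¹ i j p q) anglePolytope := fun i j p q =>
    (((hinv i p).mul (hinv j q)).add ((hinv i q).mul (hinv j p))).sub ((hinv i j).mul
      ((((hinv i p).mul (hinv i q)).div (hinv i i) (hne i)).add
        (((hinv j p).mul (hinv j q)).div (hinv j j) (hne j))))
  have hsin : ∀ e, Continuous fun a : Fin 6 → ℝ => Real.sin (a e) := fun e =>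
    Real.continuous_sin.comp (continuous_apply e)
  exact ((hgram.matrix_det.neg.sqrt.continuousOn.div (hsin e).continuousOn fun a ha =>
    (sin_pos_of_mem_anglePolytope ha e).ne').mul
      (hform _ _ _ _)).mul (hsin f).continuousOn

theorem posDef_edgeLengthJacobian {a : Fin 6 → ℝ} (ha : a ∈ anglePolytope) :
    (edgeLengthJacobian a).PosDef :=
  posDef_of_isPreconnected convex_anglePolytope.isPreconnected continuousOn_edgeLengthJacobian
    (fun _ ha => Matrix.isHermitian_iff_isSymm.2 (isSymm_edgeLengthJacobian ha))
    (fun _ ha => isUnit_edgeLengthJacobian ha) regularAngles_mem_anglePolytope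
    posDef_edgeLengthJacobian_regularAngles a ha

theorem exists_isSubgradientOn_edgeLength :
    ∃ V, ∀ a ∈ anglePolytope, IsSubgradientOn V anglePolytope a (edgeLength a) :=
  exists_isSubgradientOn_of_posSemidef convex_anglePolytope isOpen_anglePolytope
    (fun _ ha e => hasFDerivAt_edgeLength ha e)
    fun _ ha => (posDef_edgeLengthJacobian ha).posSemidef

end Volume

section VertexGram

theorem IsUnitGram.adjugate_diag_neg {M : Matrix (Fin 4) (Fin 4) ℝ} (hM : IsUnitGram M)
    (hle : ∀ i j, i ≠ j → M i j ≤ -1) (i : Fin 4) : M.adjugate i i < 0 := by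
  have hσ : Equiv.swap 3 i 3 = i := Equiv.swap_apply_left 3 i
  set σ := Equiv.swap 3 i
  have h01 := hle (σ 0) (σ 1) (σ.injective.ne (by decide))
  have h12 := hle (σ 1) (σ 2) (σ.injective.ne (by decide))
  have h02 := hle (σ 0) (σ 2) (σ.injective.ne (by decide))
  rw [← hσ, hM.adjugate_three_three]
  have hprod : 1 ≤ M (σ 0) (σ 1) * M (σ 1) (σ 2) := by nlinarith
  have hsq : (M (σ 0) (σ 1) * M (σ 1) (σ 2) + 1) ^ 2 ≤
      (M (σ 0) (σ 1) * M (σ 1) (σ 2) - M (σ 0) (σ 2)) ^ 2 :=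
    pow_le_pow_left₀ (by linarith) (by linarith) 2
  have hsum : 0 < (M (σ 0) (σ 1) + M (σ 1) (σ 2)) ^ 2 :=
    sq_pos_of_neg (by linarith)
  linarith

/-- The Gram matrix of the vertices, in de Sitter space, of the hyperideal tetrahedron with edge
lengths `max (l e) 0`. -/
noncomputable def vertexGram (l : Fin 6 → ℝ) : Matrix (Fin 4) (Fin 4) ℝ :=
  edgeGram fun e => Real.cosh (max (l e) 0)

/-- The function `φ` at the edge `e` and the lengths `max (l e) 0`, as a normalized cofactor of the
Gram matrix: the two faces through `e` are opposite to the ends of `e.rev`. -/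
noncomputable def dihedralCos (l : Fin 6 → ℝ) (e : Fin 6) : ℝ :=
  (vertexGram l).adjugate (edgeFst e.rev) (edgeSnd e.rev) /
    (√(-(vertexGram l).adjugate (edgeFst e.rev) (edgeFst e.rev)) *
      √(-(vertexGram l).adjugate (edgeSnd e.rev) (edgeSnd e.rev)))

/-- The dihedral angles `a_ij(l)`, indexed by edges. -/
noncomputable def dihedralAngle (l : Fin 6 → ℝ) (e : Fin 6) : ℝ :=
  Real.arccos (dihedralCos l e)

variable {l : Fin 6 → ℝ}

theorem isUnitGram_vertexGram (l : Fin 6 → ℝ) : IsUnitGram (vertexGram l) :=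
  isUnitGram_edgeGram _

theorem vertexGram_apply (l : Fin 6 → ℝ) {i j : Fin 4} (hij : i ≠ j) :
    vertexGram l i j = -Real.cosh (max (l (eIdx i j)) 0) :=
  edgeGram_apply _ hij

theorem vertexGram_le_neg_one (l : Fin 6 → ℝ) (i j : Fin 4) (hij : i ≠ j) :
    vertexGram l i j ≤ -1 := by
  rw [vertexGram_apply l hij]
  exact neg_le_neg (Real.one_le_cosh _)

theorem adjugate_vertexGram_diag_neg (l : Fin 6 → ℝ) (i : Fin 4) :
    (vertexGram l).adjugate i i < 0 :=
  (isUnitGram_vertexGram l).adjugate_diag_neg (vertexGram_le_neg_one l) i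

theorem isSymm_adjugate_vertexGram (l : Fin 6 → ℝ) : (vertexGram l).adjugate.IsSymm := by
  rw [Matrix.IsSymm, Matrix.adjugate_transpose, (isUnitGram_vertexGram l).isSymm.eq]

theorem dihedralCos_eIdx (l : Fin 6 → ℝ) {i j k h : Fin 4} (hd : [i, j, k, h].Nodup) :
    dihedralCos l (eIdx i j) = (vertexGram l).adjugate k h /
      (√(-(vertexGram l).adjugate k k) * √(-(vertexGram l).adjugate h h)) := by
  have hkh : k ≠ h := by simp_all
  rw [dihedralCos, rev_eIdx hd]
  exact apply_edgeFst_edgeSnd (g := fun k h => (vertexGram l).adjugate k h /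
    (√(-(vertexGram l).adjugate k k) * √(-(vertexGram l).adjugate h h)))
    (fun k h => by rw [(isSymm_adjugate_vertexGram l).apply h k, mul_comm √_]) hkh

theorem phiE_toMat_eq_dihedralCos (l : Fin 6 → ℝ) {i j k h : Fin 4} (hd : [i, j, k, h].Nodup) :
    phiE (toMat fun e => max (l e) 0) i j k h = dihedralCos l (eIdx i j) := by
  obtain ⟨σ, rfl, rfl, rfl, rfl⟩ := exists_perm_apply_eq hd
  have hM := isUnitGram_vertexGram l
  have hne : ∀ {i j}, i ≠ j → σ i ≠ σ j := fun h => σ.injective.ne h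
  have hcosh : ∀ {i j}, i ≠ j →
      Real.cosh (toMat (fun e => max (l e) 0) i j) = -vertexGram l i j := fun hij => by
    rw [vertexGram_apply l hij, neg_neg, toMat, if_neg hij]
  rw [dihedralCos_eIdx l hd, hM.adjugate_two_two, hM.adjugate_three_three, hM.adjugate_two_three]
  simp only [phiE, bfun, Real.sinh_sq, hcosh (hne (show 0 ≠ 1 by decide)),
    hcosh (hne (show 0 ≠ 2 by decide)), hcosh (hne (show 0 ≠ 3 by decide)),
    hcosh (hne (show 1 ≠ 2 by decide)), hcosh (hne (show 1 ≠ 3 by decide)),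
    hcosh (hne (show 2 ≠ 3 by decide))]
  ring_nf

theorem one_sub_sq_dihedralCos (l : Fin 6 → ℝ) (e : Fin 6) :
    ∃ c > 0, 1 - dihedralCos l e ^ 2 = -(vertexGram l).det * Real.sinh (max (l e) 0) ^ 2 * c := by
  obtain ⟨σ, h0, h1, h2, h3⟩ := exists_perm_of_edge e
  have hp := neg_pos.2 (adjugate_vertexGram_diag_neg l (edgeFst e.rev))
  have hq := neg_pos.2 (adjugate_vertexGram_diag_neg l (edgeSnd e.rev))
  have hdet := (isUnitGram_vertexGram l).det_mul_one_sub_sq σ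
  rw [h0, h1, h2, h3, vertexGram_apply l (edgeFst_ne_edgeSnd e), eIdx_edgeFst_edgeSnd, neg_sq,
    Real.cosh_sq] at hdet
  refine ⟨_, inv_pos.2 (mul_pos hp hq), ?_⟩
  rw [dihedralCos, div_pow, mul_pow, Real.sq_sqrt hp.le, Real.sq_sqrt hq.le, ← div_eq_mul_inv,
    eq_div_iff (mul_pos hp hq).ne', sub_mul, div_mul_cancel₀ _ (mul_pos hp hq).ne']
  linear_combination -hdet

theorem sq_dihedralCos_lt_one (hl : ∀ e, 0 < l e) (hdet : (vertexGram l).det < 0) (e : Fin 6) :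
    dihedralCos l e ^ 2 < 1 := by
  obtain ⟨c, hc, heq⟩ := one_sub_sq_dihedralCos l e
  have hsinh : 0 < Real.sinh (max (l e) 0) := Real.sinh_pos_iff.2 (lt_max_of_lt_left (hl e))
  exact sub_pos.1 (heq ▸ mul_pos (mul_pos (neg_pos.2 hdet) (pow_pos hsinh 2)) hc)

theorem dihedralAngle_mem_of_det_nonneg (hdet : 0 ≤ (vertexGram l).det) (e : Fin 6) :
    dihedralAngle l e ∈ ({0, Real.pi} : Set ℝ) := by
  obtain ⟨c, hc, heq⟩ := one_sub_sq_dihedralCos l e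
  have hsq : 1 ≤ dihedralCos l e ^ 2 := sub_nonpos.1 (heq ▸ mul_nonpos_of_nonpos_of_nonneg
    (mul_nonpos_of_nonpos_of_nonneg (neg_nonpos.2 hdet) (sq_nonneg _)) hc.le)
  rcases le_abs.1 ((one_le_sq_iff_one_le_abs _).1 hsq) with h | h
  · exact .inl (Real.arccos_eq_zero.2 h)
  · exact .inr (Real.arccos_eq_pi.2 (le_neg.1 h))

theorem dihedralAngle_eq_zero {e : Fin 6} (he : l e ≤ 0) : dihedralAngle l e = 0 := by
  obtain ⟨c, -, heq⟩ := one_sub_sq_dihedralCos l e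
  rw [max_eq_right he, Real.sinh_zero] at heq
  have hsq : dihedralCos l e ^ 2 = 1 := by linear_combination -heq
  have hadj : 0 ≤ (vertexGram l).adjugate (edgeFst e.rev) (edgeSnd e.rev) := by
    obtain ⟨σ, h0, h1, h2, h3⟩ := exists_perm_of_edge e
    have h01 : vertexGram l (σ 0) (σ 1) = -1 := by
      rw [h0, h1, vertexGram_apply l (edgeFst_ne_edgeSnd e), eIdx_edgeFst_edgeSnd, max_eq_right he,
        Real.cosh_zero]
    have hle : ∀ i j, i ≠ j → vertexGram l (σ i) (σ j) ≤ -1 := fun i j hij =>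
      vertexGram_le_neg_one l _ _ (σ.injective.ne hij)
    rw [← h2, ← h3, (isUnitGram_vertexGram l).adjugate_two_three, h01]
    have := mul_nonneg
      (show 0 ≤ -vertexGram l (σ 1) (σ 2) - vertexGram l (σ 0) (σ 2) by
        linarith [hle 1 2 (by decide), hle 0 2 (by decide)])
      (show 0 ≤ -vertexGram l (σ 1) (σ 3) - vertexGram l (σ 0) (σ 3) by
        linarith [hle 1 3 (by decide), hle 0 3 (by decide)])
    linarith
  have hnonneg : 0 ≤ dihedralCos l e := div_nonneg hadj (by positivity)
  exact Real.arccos_eq_zero.2 ((pow_eq_one_iff_of_nonneg hnonneg two_ne_zero).1 hsq).ge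

theorem exists_dihedralAngle_eq_pi (hdet : 0 ≤ (vertexGram l).det) :
    ∃ e, dihedralAngle l e = Real.pi := by
  by_contra! hne
  have hadj : ∀ j, j ≠ 0 → 0 ≤ (vertexGram l).adjugate j 0 := fun j hj => by
    have hother : ∀ j : Fin 4, j ≠ 0 → ∃ i k, [i, k, j, 0].Nodup := by decide
    obtain ⟨i, k, hd⟩ := hother j hj
    have hzero := (dihedralAngle_mem_of_det_nonneg hdet (eIdx i k)).resolve_right (hne _)
    have hone := Real.arccos_eq_zero.1 hzero
    rw [dihedralCos_eIdx l hd] at hone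
    by_contra! hneg
    exact absurd hone (not_le.2 ((div_nonpos_of_nonpos_of_nonneg hneg.le
      (by positivity)).trans_lt one_pos))
  have hrow : (vertexGram l).det = ∑ j, vertexGram l 0 j * (vertexGram l).adjugate j 0 := by
    rw [← Matrix.mul_apply, Matrix.mul_adjugate, Matrix.smul_apply, Matrix.one_apply_eq,
      smul_eq_mul, mul_one]
  have hterm : ∀ j, j ≠ 0 → vertexGram l 0 j * (vertexGram l).adjugate j 0 ≤ 0 := fun j hj =>
    mul_nonpos_of_nonpos_of_nonneg
      ((vertexGram_le_neg_one l 0 j hj.symm).trans (by norm_num)) (hadj j hj)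
  rw [Fin.sum_univ_four, (isUnitGram_vertexGram l).diag] at hrow
  linarith [adjugate_vertexGram_diag_neg l 0, hterm 1 (by decide), hterm 2 (by decide),
    hterm 3 (by decide)]

end VertexGram

section Duality

variable {l : Fin 6 → ℝ}

theorem isUnit_vertexGram (hdet : (vertexGram l).det < 0) : IsUnit (vertexGram l) :=
  (Matrix.isUnit_iff_isUnit_det _).2 hdet.ne.isUnit

theorem inv_vertexGram_diag_pos (hdet : (vertexGram l).det < 0) (i : Fin 4) :
    0 < (vertexGram l)⁻¹ i i := by
  rw [inv_apply_eq_inv_det_mul]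
  exact mul_pos_of_neg_of_neg (inv_lt_zero.2 hdet) (adjugate_vertexGram_diag_neg l i)

theorem isSymm_inv_vertexGram (l : Fin 6 → ℝ) : ((vertexGram l)⁻¹).IsSymm :=
  (isUnitGram_vertexGram l).isSymm.inv

theorem isUnitGram_normalizeDiag_inv_vertexGram (hdet : (vertexGram l).det < 0) :
    IsUnitGram (normalizeDiag (vertexGram l)⁻¹) :=
  isUnitGram_normalizeDiag (isSymm_inv_vertexGram l) (inv_vertexGram_diag_pos hdet)

theorem normalizeDiag_inv_vertexGram_apply (hdet : (vertexGram l).det < 0) {i j k h : Fin 4}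
    (hd : [i, j, k, h].Nodup) :
    normalizeDiag (vertexGram l)⁻¹ k h = -dihedralCos l (eIdx i j) := by
  have hD : 0 < (-(vertexGram l).det)⁻¹ := inv_pos.2 (neg_pos.2 hdet)
  have hdiag : ∀ i, (vertexGram l)⁻¹ i i =
      (-(vertexGram l).det)⁻¹ * -(vertexGram l).adjugate i i := fun i => by
    rw [inv_apply_eq_inv_det_mul, inv_neg, neg_mul_neg]
  rw [normalizeDiag, Matrix.of_apply, hdiag, hdiag, Real.sqrt_mul hD.le, Real.sqrt_mul hD.le,
    mul_mul_mul_comm, Real.mul_self_sqrt hD.le, inv_apply_eq_inv_det_mul, dihedralCos_eIdx l hd,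
    ← neg_neg (vertexGram l).det, inv_neg, neg_neg, neg_mul, neg_div,
    mul_div_mul_left _ _ hD.ne']

theorem dihedralGram_dihedralAngle (hl : ∀ e, 0 < l e) (hdet : (vertexGram l).det < 0) :
    dihedralGram (dihedralAngle l) = normalizeDiag (vertexGram l)⁻¹ := by
  ext k h
  rcases eq_or_ne k h with rfl | hkh
  · rw [(isUnitGram_dihedralGram _).diag, (isUnitGram_normalizeDiag_inv_vertexGram hdet).diag]
  · have hother : ∀ k h : Fin 4, k ≠ h → ∃ i j, [i, j, k, h].Nodup ∧ [k, h, i, j].Nodup := by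
      decide
    obtain ⟨i, j, hd, hd'⟩ := hother k h hkh
    have habs := abs_lt.1 ((sq_lt_one_iff_abs_lt_one _).1
      (sq_dihedralCos_lt_one hl hdet (eIdx i j)))
    rw [dihedralGram_apply _ hd', normalizeDiag_inv_vertexGram_apply hdet hd, dihedralAngle,
      Real.cos_arccos habs.1.le habs.2.le]

theorem mul_lt_mul_inv_vertexGram (hdet : (vertexGram l).det < 0) {i j k : Fin 4} (hij : i ≠ j)
    (hjk : j ≠ k) (hik : i ≠ k) :
    (vertexGram l)⁻¹ j j * (vertexGram l)⁻¹ i k < (vertexGram l)⁻¹ i j * (vertexGram l)⁻¹ j k := by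
  have hother : ∀ i j k : Fin 4, i ≠ j → j ≠ k → i ≠ k → ∃ h, [h, j, i, k].Nodup := by decide
  obtain ⟨h, hd⟩ := hother i j k hij hjk hik
  obtain ⟨σ, rfl, rfl, rfl, rfl⟩ := exists_perm_apply_eq hd
  have hle : ∀ i j, i ≠ j → vertexGram l (σ i) (σ j) ≤ -1 := fun i j hij =>
    vertexGram_le_neg_one l _ _ (σ.injective.ne hij)
  have hentries : 0 < vertexGram l (σ 0) (σ 2) * vertexGram l (σ 0) (σ 3) -
      vertexGram l (σ 2) (σ 3) := by
    nlinarith [hle 0 2 (by decide), hle 0 3 (by decide), hle 2 3 (by decide)]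
  have hadj := (isUnitGram_vertexGram l).det_mul_mul_sub σ ▸ mul_neg_of_neg_of_pos hdet hentries
  rw [(isSymm_adjugate_vertexGram l).apply (σ 2) (σ 1)] at hadj
  simp only [inv_apply_eq_inv_det_mul, mul_mul_mul_comm _ (Matrix.adjugate _ _ _)]
  exact mul_lt_mul_of_pos_left (sub_neg.1 hadj) (mul_self_pos.2 (inv_ne_zero hdet.ne))

theorem dihedralAngle_mem_anglePolytope (hl : ∀ e, 0 < l e) (hdet : (vertexGram l).det < 0) :
    dihedralAngle l ∈ anglePolytope := by
  have hgram := dihedralGram_dihedralAngle hl hdet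
  have hKpos := inv_vertexGram_diag_pos hdet
  have hHdet : (normalizeDiag (vertexGram l)⁻¹).det < 0 :=
    det_normalizeDiag_neg hKpos (by
      rw [Matrix.det_nonsing_inv, Ring.inverse_eq_inv']
      exact inv_lt_zero.2 hdet)
  have hIoo : ∀ e, dihedralAngle l e ∈ Ioo 0 Real.pi := fun e => by
    have habs := abs_lt.1 ((sq_lt_one_iff_abs_lt_one _).1 (sq_dihedralCos_lt_one hl hdet e))
    exact ⟨Real.arccos_pos.2 habs.2, Real.arccos_lt_pi.2 habs.1⟩
  rw [mem_anglePolytope_iff hIoo, hgram]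
  refine ⟨fun i j k hij hjk hik => ?_, fun i => ?_⟩
  · have hlt := mul_lt_mul_inv_vertexGram hdet hij hjk hik
    have hsqrt := fun i => Real.sqrt_pos.2 (hKpos i)
    have hden : √((vertexGram l)⁻¹ i i) * √((vertexGram l)⁻¹ j j) *
        (√((vertexGram l)⁻¹ j j) * √((vertexGram l)⁻¹ k k)) =
        (vertexGram l)⁻¹ j j * (√((vertexGram l)⁻¹ i i) * √((vertexGram l)⁻¹ k k)) := by
      linear_combination √((vertexGram l)⁻¹ i i) * √((vertexGram l)⁻¹ k k) *
        Real.mul_self_sqrt (hKpos j).le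
    rw [normalizeDiag, Matrix.of_apply, Matrix.of_apply, Matrix.of_apply, div_mul_div_comm, hden,
      ← div_div _ ((vertexGram l)⁻¹ j j),
      div_lt_div_iff_of_pos_right (mul_pos (hsqrt i) (hsqrt k)), lt_div_iff₀' (hKpos j)]
    exact hlt
  · have hdiag := inv_normalizeDiag_inv_diag (isUnitGram_vertexGram l)
      (isUnit_vertexGram hdet) hKpos i
    rw [inv_apply_eq_inv_det_mul] at hdiag
    exact (neg_iff_neg_of_mul_pos (hdiag ▸ hKpos i)).1 (inv_lt_zero.2 hHdet)

theorem edgeLength_dihedralAngle (hl : ∀ e, 0 < l e) (hdet : (vertexGram l).det < 0) :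
    edgeLength (dihedralAngle l) = l := by
  ext e
  rw [edgeLength, dihedralGram_dihedralAngle hl hdet,
    normalizeDiag_inv_normalizeDiag_inv (isUnitGram_vertexGram l) (isUnit_vertexGram hdet)
      (inv_vertexGram_diag_pos hdet), vertexGram_apply l (edgeFst_ne_edgeSnd e),
    eIdx_edgeFst_edgeSnd, neg_neg, max_eq_left (hl e).le, Real.arcosh_cosh (hl e).le]

end Duality

section NormalCone

/-- The edge lengths of hyperideal tetrahedra: positive, with a vertex Gram matrix of negative
determinant, i.e. of Lorentzian signature. -/
def hyperidealLengths : Set (Fin 6 → ℝ) :=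
  {l | (∀ e, 0 < l e) ∧ (vertexGram l).det < 0}

variable {l : Fin 6 → ℝ}

theorem continuous_vertexGram : Continuous vertexGram :=
  continuous_matrix fun i j => by
    rcases eq_or_ne i j with rfl | hij
    · simp only [(isUnitGram_vertexGram _).diag]
      exact continuous_const
    · simp only [vertexGram_apply _ hij]
      fun_prop

theorem continuous_dihedralAngle : Continuous dihedralAngle :=
  continuous_pi fun e => by
    have hadj : ∀ i j, Continuous fun l => (vertexGram l).adjugate i j := fun i j =>
      continuous_vertexGram.matrix_adjugate.matrix_elem i j
    have hpos : ∀ l i, 0 < √(-(vertexGram l).adjugate i i) := fun l i =>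
      Real.sqrt_pos.2 (neg_pos.2 (adjugate_vertexGram_diag_neg l i))
    exact Real.continuous_arccos.comp ((hadj _ _).div
      ((hadj _ _).neg.sqrt.mul (hadj _ _).neg.sqrt) fun l => (mul_pos (hpos l _) (hpos l _)).ne')

theorem mem_closure_hyperidealLengths (hl : ∀ e, 0 ≤ l e) (hdet : (vertexGram l).det < 0) :
    l ∈ closure hyperidealLengths := by
  have hlim : Filter.Tendsto (fun ε : ℝ => l + fun _ => ε) (𝓝[>] 0) (𝓝 l) :=
    ((show Continuous fun ε : ℝ => l + fun _ => ε by fun_prop).tendsto' 0 l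
      (add_zero l)).mono_left nhdsWithin_le_nhds
  refine mem_closure_of_tendsto hlim ?_
  have hopen : IsOpen {l | (vertexGram l).det < 0} :=
    isOpen_lt continuous_vertexGram.matrix_det continuous_const
  filter_upwards [hlim.eventually (hopen.mem_nhds hdet), self_mem_nhdsWithin] with ε hε hpos
  exact ⟨fun e => add_pos_of_nonneg_of_pos (hl e) hpos, hε⟩

theorem dihedralAngle_congr_of_isPreconnected {s : Set (Fin 6 → ℝ)} (hs : IsPreconnected s)
    (hdet : ∀ l ∈ s, 0 ≤ (vertexGram l).det) {x y : Fin 6 → ℝ} (hx : x ∈ s) (hy : y ∈ s) :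
    dihedralAngle x = dihedralAngle y := by
  funext e
  exact hs.constant_of_mapsTo (Set.toFinite {0, Real.pi}).isDiscrete
    ((continuous_apply e).comp continuous_dihedralAngle).continuousOn
    (fun l hl => dihedralAngle_mem_of_det_nonneg (hdet l hl) e) hx hy

theorem dihedralAngle_update_congr {e : Fin 6} {s : Set ℝ} (hs : IsPreconnected s)
    (hdet : ∀ t ∈ s, 0 ≤ (vertexGram (Function.update l e t)).det) {x y : ℝ} (hx : x ∈ s)
    (hy : y ∈ s) :
    dihedralAngle (Function.update l e x) = dihedralAngle (Function.update l e y) :=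
  have hupdate : Continuous (Function.update l e) := continuous_const.update e continuous_id
  dihedralAngle_congr_of_isPreconnected (hs.image _ hupdate.continuousOn)
    (forall_mem_image.2 hdet) (mem_image_of_mem _ hx) (mem_image_of_mem _ hy)

theorem exists_det_vertexGram_update_neg {e : Fin 6} (he : 0 ≤ l e)
    (hpi : dihedralAngle l e = Real.pi) :
    ∃ t ∈ Icc 0 (l e), (vertexGram (Function.update l e t)).det < 0 := by
  by_contra! hdet
  have hconst := dihedralAngle_update_congr isPreconnected_Icc hdet (left_mem_Icc.2 he)
    (right_mem_Icc.2 he)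
  have hzero : dihedralAngle (Function.update l e 0) e = 0 :=
    dihedralAngle_eq_zero (Function.update_self e 0 l).le
  rw [hconst, Function.update_eq_self, hpi] at hzero
  exact Real.pi_ne_zero hzero

theorem exists_update_mem_closure_hyperidealLengths (hl : ∀ e, 0 ≤ l e) {e : Fin 6}
    (hpi : dihedralAngle l e = Real.pi) :
    ∃ t ≤ l e, Function.update l e t ∈ closure hyperidealLengths ∧
      dihedralAngle (Function.update l e t) = dihedralAngle l := by
  set Z := {t ∈ Icc 0 (l e) | (vertexGram (Function.update l e t)).det < 0}
  have hZne : Z.Nonempty := exists_det_vertexGram_update_neg (hl e) hpi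
  have hZbdd : BddAbove Z := ⟨l e, fun t ht => ht.1.2⟩
  have hupdate : Continuous (Function.update l e) := continuous_const.update e continuous_id
  have hle : sSup Z ≤ l e := csSup_le hZne fun t ht => ht.1.2
  have hnonneg : 0 ≤ sSup Z := Real.sSup_nonneg fun t ht => ht.1.1
  refine ⟨sSup Z, hle, ?_, ?_⟩
  · have hmaps : MapsTo (Function.update l e) Z (closure hyperidealLengths) := fun t ht =>
      mem_closure_hyperidealLengths
        (Function.forall_update_iff l (p := fun _ x => 0 ≤ x) |>.2 ⟨ht.1.1, fun f _ => hl f⟩) ht.2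
    exact closure_closure (s := hyperidealLengths) ▸
      map_mem_closure hupdate (csSup_mem_closure hZne hZbdd) hmaps
  · have hdet : ∀ t ∈ Ioc (sSup Z) (l e), 0 ≤ (vertexGram (Function.update l e t)).det :=
      fun t ht => le_of_not_gt fun hneg =>
        (le_csSup hZbdd ⟨⟨hnonneg.trans ht.1.le, ht.2⟩, hneg⟩).not_gt ht.1
    have heqOn : EqOn (fun t => dihedralAngle (Function.update l e t))
        (fun _ => dihedralAngle l) (Ioc (sSup Z) (l e)) := fun t ht =>
      (dihedralAngle_update_congr isPreconnected_Ioc hdet ht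
        (right_mem_Ioc.2 (ht.1.trans_le ht.2))).trans (by rw [Function.update_eq_self])
    rcases hle.eq_or_lt with heq | hlt
    · rw [heq, Function.update_eq_self]
    · have hmem : sSup Z ∈ closure (Ioc (sSup Z) (l e)) := by
        rw [closure_Ioc hlt.ne]
        exact left_mem_Icc.2 hle
      exact (heqOn.closure (continuous_dihedralAngle.comp hupdate) continuous_const) hmem

theorem exists_mem_closure_hyperidealLengths_of_nonneg (hl : ∀ e, 0 ≤ l e) :
    ∃ l₀ ∈ closure hyperidealLengths, dihedralAngle l₀ = dihedralAngle l ∧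
      ∀ e, l₀ e = l e ∨ l₀ e ≤ l e ∧ dihedralAngle l e = Real.pi := by
  rcases lt_or_ge (vertexGram l).det 0 with hdet | hdet
  · exact ⟨l, mem_closure_hyperidealLengths hl hdet, rfl, fun e => .inl rfl⟩
  · obtain ⟨e, hpi⟩ := exists_dihedralAngle_eq_pi hdet
    obtain ⟨t, ht, hmem, heq⟩ := exists_update_mem_closure_hyperidealLengths hl hpi
    exact ⟨_, hmem, heq, (Function.forall_update_iff l
      (p := fun f x => x = l f ∨ x ≤ l f ∧ dihedralAngle l f = Real.pi)).2
      ⟨.inr ⟨ht, hpi⟩, fun f _ => .inl rfl⟩⟩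

theorem dihedralAngle_max_zero (l : Fin 6 → ℝ) :
    dihedralAngle (fun e => max (l e) 0) = dihedralAngle l := by
  have hgram : vertexGram (fun e => max (l e) 0) = vertexGram l := by
    simp only [vertexGram, max_assoc, max_self]
  funext e
  rw [dihedralAngle, dihedralAngle, dihedralCos, dihedralCos, hgram]

theorem exists_normal_dihedralAngle (l : Fin 6 → ℝ) :
    ∃ l₀ ∈ closure hyperidealLengths, dihedralAngle l₀ = dihedralAngle l ∧
      ∀ b ∈ anglePolytope, (l - l₀) ⬝ᵥ (b - dihedralAngle l) ≤ 0 := by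
  obtain ⟨l₀, hmem, heq, hl₀⟩ :=
    exists_mem_closure_hyperidealLengths_of_nonneg fun e => le_max_right (l e) 0
  rw [dihedralAngle_max_zero] at heq hl₀
  refine ⟨l₀, hmem, heq, fun b hb => Finset.sum_nonpos fun e _ => ?_⟩
  have hbe := mem_Ioo_of_mem_anglePolytope hb e
  have hneg : (l e - max (l e) 0) * (b e - dihedralAngle l e) ≤ 0 := by
    rcases le_total (l e) 0 with he | he
    · rw [dihedralAngle_eq_zero he, sub_zero]
      exact mul_nonpos_of_nonpos_of_nonneg (sub_nonpos.2 (le_max_left _ _)) hbe.1.le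
    · rw [max_eq_left he, sub_self, zero_mul]
  have hpos : (max (l e) 0 - l₀ e) * (b e - dihedralAngle l e) ≤ 0 := by
    rcases hl₀ e with h | ⟨hle, hpi⟩
    · rw [h, sub_self, zero_mul]
    · rw [hpi]
      exact mul_nonpos_of_nonneg_of_nonpos (sub_nonneg.2 hle) (sub_nonpos.2 hbe.2.le)
  rw [Pi.sub_apply, Pi.sub_apply, ← sub_add_sub_cancel _ (max (l e) 0), add_mul]
  exact add_nonpos hneg hpos

end NormalCone

theorem stmt17 :
    ∃ cov : (Fin 6 → ℝ) → ℝ,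
      ContDiff ℝ 1 cov ∧ ConvexOn ℝ Set.univ cov ∧
      ∀ l : Fin 6 → ℝ, ∀ i j k h : Fin 4,
        i ≠ j → i ≠ k → i ≠ h → j ≠ k → j ≠ h → k ≠ h →
        fderiv ℝ cov l (Pi.single (eIdx i j) 1) =
          Real.arccos (phiE (toMat (fun m => max (l m) 0)) i j k h) := by
  obtain ⟨cov, hsmooth, hconvex, hderiv⟩ := exists_contDiff_convexOn_fderiv_eq
    ⟨_, regularAngles_mem_anglePolytope⟩ isBounded_anglePolytope exists_isSubgradientOn_edgeLength
    continuous_dihedralAngle (fun l hl => ⟨dihedralAngle_mem_anglePolytope hl.1 hl.2,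
      edgeLength_dihedralAngle hl.1 hl.2⟩) exists_normal_dihedralAngle
  refine ⟨cov, hsmooth, hconvex, fun l i j k h hij hik hih hjk hjh hkh => ?_⟩
  have hd : [i, j, k, h].Nodup := by simp [*]
  rw [hderiv, phiE_toMat_eq_dihedralCos l hd, dihedralAngle]
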